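/- There exist universal constants C_b > 0 (used in the penalty of VI-LCB-Game) and c₄ > 0 such that the following holds for γ ∈ [1/2,1) and δ ∈ (0,1). With probability at least 1−δ over the dataset, the value function V_pe^− produced by VI-LCB-Game satisfies Var_{P̂(·|s,a,b)}(V_pe^−) ≤ 2·Var_{P(·|s,a,b)}(V_pe^−) + c₄·log(N/((1−γ)δ)) / ((1−γ)²·N·d_b(s,a,b)) simultaneously for all (s,a,b) ∈ 𝒮×𝒜×ℬ with d_b(s,a,b) > 0. -/

import Mathlib

open scoped BigOperators ENNReal Classical

noncomputable section

namespace ZSMG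

variable {𝒮 𝒜 ℬ : Type} [Fintype 𝒮] [Fintype 𝒜] [Fintype ℬ]
  [DecidableEq 𝒮] [DecidableEq 𝒜] [DecidableEq ℬ]

/-- Expectation of `V : 𝒮 → ℝ` under the (sub)probability vector `p`. -/
def Pexp (p V : 𝒮 → ℝ) : ℝ := ∑ s', p s' * V s'

/-- Variance of `V` under `p`: `Var_p(V) = p(V∘V) − (pV)²`. -/
def varP (p V : 𝒮 → ℝ) : ℝ := Pexp p (fun s => V s * V s) - (Pexp p V) ^ 2

/-- Payoff of mixed strategies `w, z` in the matrix game `M`. -/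
def pay (M : 𝒜 → ℬ → ℝ) (w : 𝒜 → ℝ) (z : ℬ → ℝ) : ℝ :=
  ∑ a, ∑ b, w a * z b * M a b

/-- Value function associated with a Q-function: minimax value at each state. -/
def valQ (Q : 𝒮 → 𝒜 → ℬ → ℝ) (s : 𝒮) : ℝ :=
  ⨆ w : stdSimplex ℝ 𝒜, ⨅ z : stdSimplex ℝ ℬ, pay (Q s) w.1 z.1

/-- Sup norm over states. -/
def supNormS (f : 𝒮 → ℝ) : ℝ := ⨆ s, |f s|

/-- Sup norm over state-action triples. -/
def supNormQ (f : 𝒮 → 𝒜 → ℬ → ℝ) : ℝ := ⨆ s, ⨆ a, ⨆ b, |f s a b|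

/-- The Bernstein-style penalty `β(s,a,b;V)`; `n` is the count `N(s,a,b)` and
`p` is the row `P̂(·|s,a,b)` of the empirical kernel. -/
def penalty (γ δ Cb : ℝ) (N n : ℕ) (p V : 𝒮 → ℝ) : ℝ :=
  (if n = 0 then 1 / (1 - γ)
   else
     min
       (max (Real.sqrt (Cb * Real.log ((N : ℝ) / ((1 - γ) * δ)) * varP p V / (n : ℝ)))
         (2 * Cb * Real.log ((N : ℝ) / ((1 - γ) * δ)) / ((1 - γ) * (n : ℝ))))
       (1 / (1 - γ))) + 4 / (N : ℝ)

/-- The pessimistic Bellman operator for the max-player. -/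
def TpeMinus (γ δ Cb : ℝ) (N : ℕ) (n : 𝒮 → 𝒜 → ℬ → ℕ)
    (Ph : 𝒮 → 𝒜 → ℬ → 𝒮 → ℝ) (rh : 𝒮 → 𝒜 → ℬ → ℝ)
    (Q : 𝒮 → 𝒜 → ℬ → ℝ) : 𝒮 → 𝒜 → ℬ → ℝ := fun s a b =>
  max (rh s a b + γ * Pexp (Ph s a b) (valQ Q)
        - penalty γ δ Cb N (n s a b) (Ph s a b) (valQ Q)) 0

/-- The pessimistic Bellman operator for the min-player. -/
def TpePlus (γ δ Cb : ℝ) (N : ℕ) (n : 𝒮 → 𝒜 → ℬ → ℕ)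
    (Ph : 𝒮 → 𝒜 → ℬ → 𝒮 → ℝ) (rh : 𝒮 → 𝒜 → ℬ → ℝ)
    (Q : 𝒮 → 𝒜 → ℬ → ℝ) : 𝒮 → 𝒜 → ℬ → ℝ := fun s a b =>
  min (rh s a b + γ * Pexp (Ph s a b) (valQ Q)
        + penalty γ δ Cb N (n s a b) (Ph s a b) (valQ Q)) (1 / (1 - γ))

/-- Count `N(s,a,b)` of occurrences of `(s,a,b)` in the dataset `D`. -/
def cnt {N : ℕ} (D : Fin N → 𝒮 × 𝒜 × ℬ × 𝒮) (s : 𝒮) (a : 𝒜) (b : ℬ) : ℕ :=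
  (Finset.univ.filter fun i => (D i).1 = s ∧ (D i).2.1 = a ∧ (D i).2.2.1 = b).card

/-- Count of full transitions `(s,a,b,s')` in the dataset `D`. -/
def cntT {N : ℕ} (D : Fin N → 𝒮 × 𝒜 × ℬ × 𝒮) (s : 𝒮) (a : 𝒜) (b : ℬ) (s' : 𝒮) : ℕ :=
  (Finset.univ.filter fun i => D i = (s, a, b, s')).card

/-- Empirical transition kernel `P̂(·|s,a,b)` built from the dataset. -/
def Phat {N : ℕ} (D : Fin N → 𝒮 × 𝒜 × ℬ × 𝒮) (s : 𝒮) (a : 𝒜) (b : ℬ) : 𝒮 → ℝ := fun s' =>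
  if cnt D s a b = 0 then ((Fintype.card 𝒮 : ℝ))⁻¹
  else (cntT D s a b s' : ℝ) / (cnt D s a b : ℝ)

/-- Empirical reward `r̂` built from the dataset. -/
def rhat {N : ℕ} (r : 𝒮 → 𝒜 → ℬ → ℝ) (D : Fin N → 𝒮 × 𝒜 × ℬ × 𝒮)
    (s : 𝒮) (a : 𝒜) (b : ℬ) : ℝ :=
  if cnt D s a b = 0 then 0 else r s a b

/-- Number of iterations `T = ⌈log(N/(1−γ))/log(1/γ)⌉` of VI-LCB-Game. -/
def Titer (γ : ℝ) (N : ℕ) : ℕ := ⌈Real.log ((N : ℝ) / (1 - γ)) / Real.log (1 / γ)⌉₊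

/-- `Q_pe^− = Q⁻_T` produced by VI-LCB-Game on the dataset `D`. -/
def QpeMinus (γ δ Cb : ℝ) (r : 𝒮 → 𝒜 → ℬ → ℝ) {N : ℕ}
    (D : Fin N → 𝒮 × 𝒜 × ℬ × 𝒮) : 𝒮 → 𝒜 → ℬ → ℝ :=
  (TpeMinus γ δ Cb N (cnt D) (Phat D) (rhat r D))^[Titer γ N] (fun _ _ _ => 0)

/-- `Q_pe^+ = Q⁺_T` produced by VI-LCB-Game on the dataset `D`. -/
def QpePlus (γ δ Cb : ℝ) (r : 𝒮 → 𝒜 → ℬ → ℝ) {N : ℕ}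
    (D : Fin N → 𝒮 × 𝒜 × ℬ × 𝒮) : 𝒮 → 𝒜 → ℬ → ℝ :=
  (TpePlus γ δ Cb N (cnt D) (Phat D) (rhat r D))^[Titer γ N] (fun _ _ _ => 1 / (1 - γ))

/-- `(w,z)` is a (mixed) Nash equilibrium / saddle point of the matrix game `M`. -/
def IsMatrixNash (M : 𝒜 → ℬ → ℝ) (w : 𝒜 → ℝ) (z : ℬ → ℝ) : Prop :=
  w ∈ stdSimplex ℝ 𝒜 ∧ z ∈ stdSimplex ℝ ℬ ∧
    (∀ w' ∈ stdSimplex ℝ 𝒜, pay M w' z ≤ pay M w z) ∧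
    (∀ z' ∈ stdSimplex ℝ ℬ, pay M w z ≤ pay M w z')

/-- `μ` is a possible max-player output of the algorithm, given the final Q-estimate `Q`. -/
def IsOutputMax (Q : 𝒮 → 𝒜 → ℬ → ℝ) (μ : 𝒮 → 𝒜 → ℝ) : Prop :=
  ∀ s, ∃ z, IsMatrixNash (Q s) (μ s) z

/-- `ν` is a possible min-player output of the algorithm, given the final Q-estimate `Q`. -/
def IsOutputMin (Q : 𝒮 → 𝒜 → ℬ → ℝ) (ν : 𝒮 → ℬ → ℝ) : Prop :=
  ∀ s, ∃ w, IsMatrixNash (Q s) w (ν s)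

/-- `μ` is a stationary (Markov) policy. -/
def IsPolicy (μ : 𝒮 → 𝒜 → ℝ) : Prop := ∀ s, μ s ∈ stdSimplex ℝ 𝒜

/-- `P` is a probability transition kernel. -/
def IsKernel (P : 𝒮 → 𝒜 → ℬ → 𝒮 → ℝ) : Prop := ∀ s a b, P s a b ∈ stdSimplex ℝ 𝒮

/-- `r` is a reward function with values in `[0,1]`. -/
def IsReward (r : 𝒮 → 𝒜 → ℬ → ℝ) : Prop := ∀ s a b, r s a b ∈ Set.Icc (0 : ℝ) 1

/-- `d` is a probability distribution over `𝒮 × 𝒜 × ℬ`. -/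
def IsDist3 (d : 𝒮 → 𝒜 → ℬ → ℝ) : Prop :=
  (∀ s a b, 0 ≤ d s a b) ∧ (∑ s, ∑ a, ∑ b, d s a b) = 1

/-- Transition matrix `P^{μ,ν}` of the product policy `μ × ν`. -/
def Pmat (P : 𝒮 → 𝒜 → ℬ → 𝒮 → ℝ) (μ : 𝒮 → 𝒜 → ℝ) (ν : 𝒮 → ℬ → ℝ) :
    Matrix 𝒮 𝒮 ℝ :=
  Matrix.of fun s s' => ∑ a, ∑ b, μ s a * ν s b * P s a b s'

/-- Reward vector `r^{μ,ν}` of the product policy `μ × ν`. -/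
def rPol (r : 𝒮 → 𝒜 → ℬ → ℝ) (μ : 𝒮 → 𝒜 → ℝ) (ν : 𝒮 → ℬ → ℝ) : 𝒮 → ℝ :=
  fun s => ∑ a, ∑ b, μ s a * ν s b * r s a b

/-- Value function `V^{μ,ν} = (I − γP^{μ,ν})⁻¹ r^{μ,ν}`. -/
def Vpol (γ : ℝ) (P : 𝒮 → 𝒜 → ℬ → 𝒮 → ℝ) (r : 𝒮 → 𝒜 → ℬ → ℝ)
    (μ : 𝒮 → 𝒜 → ℝ) (ν : 𝒮 → ℬ → ℝ) : 𝒮 → ℝ :=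
  Matrix.mulVec ((1 : Matrix 𝒮 𝒮 ℝ) - γ • Pmat P μ ν)⁻¹ (rPol r μ ν)

/-- `V^{μ,⋆}(s) = min_ν V^{μ,ν}(s)`. -/
def VmuStar (γ : ℝ) (P : 𝒮 → 𝒜 → ℬ → 𝒮 → ℝ) (r : 𝒮 → 𝒜 → ℬ → ℝ)
    (μ : 𝒮 → 𝒜 → ℝ) : 𝒮 → ℝ := fun s =>
  ⨅ ν : {ν : 𝒮 → ℬ → ℝ // IsPolicy ν}, Vpol γ P r μ ν.1 s

/-- `V^{⋆,ν}(s) = max_μ V^{μ,ν}(s)`. -/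
def VstarNu (γ : ℝ) (P : 𝒮 → 𝒜 → ℬ → 𝒮 → ℝ) (r : 𝒮 → 𝒜 → ℬ → ℝ)
    (ν : 𝒮 → ℬ → ℝ) : 𝒮 → ℝ := fun s =>
  ⨆ μ : {μ : 𝒮 → 𝒜 → ℝ // IsPolicy μ}, Vpol γ P r μ.1 ν s

/-- `Q^{μ,ν}(s,a,b) = r(s,a,b) + γ P(·|s,a,b) V^{μ,ν}`. -/
def Qpol (γ : ℝ) (P : 𝒮 → 𝒜 → ℬ → 𝒮 → ℝ) (r : 𝒮 → 𝒜 → ℬ → ℝ)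
    (μ : 𝒮 → 𝒜 → ℝ) (ν : 𝒮 → ℬ → ℝ) : 𝒮 → 𝒜 → ℬ → ℝ := fun s a b =>
  r s a b + γ * Pexp (P s a b) (Vpol γ P r μ ν)

/-- `Q^{μ,⋆}(s,a,b) = min_ν Q^{μ,ν}(s,a,b)`. -/
def QmuStar (γ : ℝ) (P : 𝒮 → 𝒜 → ℬ → 𝒮 → ℝ) (r : 𝒮 → 𝒜 → ℬ → ℝ)
    (μ : 𝒮 → 𝒜 → ℝ) : 𝒮 → 𝒜 → ℬ → ℝ := fun s a b =>
  ⨅ ν : {ν : 𝒮 → ℬ → ℝ // IsPolicy ν}, Qpol γ P r μ ν.1 s a b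

/-- `Q^{⋆,ν}(s,a,b) = max_μ Q^{μ,ν}(s,a,b)`. -/
def QstarNu (γ : ℝ) (P : 𝒮 → 𝒜 → ℬ → 𝒮 → ℝ) (r : 𝒮 → 𝒜 → ℬ → ℝ)
    (ν : 𝒮 → ℬ → ℝ) : 𝒮 → 𝒜 → ℬ → ℝ := fun s a b =>
  ⨆ μ : {μ : 𝒮 → 𝒜 → ℝ // IsPolicy μ}, Qpol γ P r μ.1 ν s a b

/-- `(μs, νs)` is a Nash equilibrium of the Markov game. -/
def IsNashPair (γ : ℝ) (P : 𝒮 → 𝒜 → ℬ → 𝒮 → ℝ) (r : 𝒮 → 𝒜 → ℬ → ℝ)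
    (μs : 𝒮 → 𝒜 → ℝ) (νs : 𝒮 → ℬ → ℝ) : Prop :=
  IsPolicy μs ∧ IsPolicy νs ∧
    (∀ μ, IsPolicy μ → ∀ s, Vpol γ P r μ νs s ≤ Vpol γ P r μs νs s) ∧
    (∀ ν, IsPolicy ν → ∀ s, Vpol γ P r μs νs s ≤ Vpol γ P r μs ν s)

/-- `V(ρ) = Σ_s ρ(s) V(s)`. -/
def wAvg (ρ V : 𝒮 → ℝ) : ℝ := ∑ s, ρ s * V s

/-- Discounted occupancy measure `d^{μ,ν}(s;ρ) = (1−γ) ρᵀ(I−γP^{μ,ν})⁻¹`. -/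
def dOcc (γ : ℝ) (P : 𝒮 → 𝒜 → ℬ → 𝒮 → ℝ) (μ : 𝒮 → 𝒜 → ℝ) (ν : 𝒮 → ℬ → ℝ)
    (ρ : 𝒮 → ℝ) : 𝒮 → ℝ := fun s =>
  (1 - γ) * Matrix.vecMul ρ ((1 : Matrix 𝒮 𝒮 ℝ) - γ • Pmat P μ ν)⁻¹ s

/-- `d^{μ,ν}(s,a,b;ρ) = d^{μ,ν}(s;ρ) μ(a|s) ν(b|s)`. -/
def dOcc3 (γ : ℝ) (P : 𝒮 → 𝒜 → ℬ → 𝒮 → ℝ) (μ : 𝒮 → 𝒜 → ℝ) (ν : 𝒮 → ℬ → ℝ)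
    (ρ : 𝒮 → ℝ) : 𝒮 → 𝒜 → ℬ → ℝ := fun s a b =>
  dOcc γ P μ ν ρ s * μ s a * ν s b

/-- Clipped unilateral concentrability coefficient `C⋆_clipped` (in `ℝ≥0∞`;
note that in `ℝ≥0∞` one has `x/0 = ∞` for `x ≠ 0` and `0/0 = 0`, matching the
convention of the paper). -/
def clipCoeff (γ : ℝ) (P : 𝒮 → 𝒜 → ℬ → 𝒮 → ℝ) (ρ : 𝒮 → ℝ) (d : 𝒮 → 𝒜 → ℬ → ℝ)
    (μs : 𝒮 → 𝒜 → ℝ) (νs : 𝒮 → ℬ → ℝ) : ℝ≥0∞ :=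
  max
    (⨆ (μ : {μ : 𝒮 → 𝒜 → ℝ // IsPolicy μ}) (s : 𝒮) (a : 𝒜) (b : ℬ),
      ENNReal.ofReal
          (min (dOcc3 γ P μ.1 νs ρ s a b)
            ((Fintype.card 𝒮 * (Fintype.card 𝒜 + Fintype.card ℬ) : ℝ))⁻¹) /
        ENNReal.ofReal (d s a b))
    (⨆ (ν : {ν : 𝒮 → ℬ → ℝ // IsPolicy ν}) (s : 𝒮) (a : 𝒜) (b : ℬ),
      ENNReal.ofReal
          (min (dOcc3 γ P μs ν.1 ρ s a b)
            ((Fintype.card 𝒮 * (Fintype.card 𝒜 + Fintype.card ℬ) : ℝ))⁻¹) /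
        ENNReal.ofReal (d s a b))

/-- Probability weight of an individual dataset under `(d_b, P)`. -/
def dsWeight {N : ℕ} (d : 𝒮 → 𝒜 → ℬ → ℝ) (P : 𝒮 → 𝒜 → ℬ → 𝒮 → ℝ)
    (D : Fin N → 𝒮 × 𝒜 × ℬ × 𝒮) : ℝ :=
  ∏ i, d (D i).1 (D i).2.1 (D i).2.2.1 * P (D i).1 (D i).2.1 (D i).2.2.1 (D i).2.2.2

/-- Probability of an event over the offline dataset. -/
def dsProb {N : ℕ} (d : 𝒮 → 𝒜 → ℬ → ℝ) (P : 𝒮 → 𝒜 → ℬ → 𝒮 → ℝ)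
    (E : Set (Fin N → 𝒮 × 𝒜 × ℬ × 𝒮)) : ℝ :=
  ∑ D : Fin N → 𝒮 × 𝒜 × ℬ × 𝒮, E.indicator (dsWeight d P) D

/-- Expectation of a function of the offline dataset. -/
def dsExp {N : ℕ} (d : 𝒮 → 𝒜 → ℬ → ℝ) (P : 𝒮 → 𝒜 → ℬ → 𝒮 → ℝ)
    (g : (Fin N → 𝒮 × 𝒜 × ℬ × 𝒮) → ℝ) : ℝ :=
  ∑ D : Fin N → 𝒮 × 𝒜 × ℬ × 𝒮, dsWeight d P D * g D

/-- Dirac (deterministic) policy for the min-player. -/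
def diracB (f : 𝒮 → ℬ) : 𝒮 → ℬ → ℝ := fun s b => if b = f s then 1 else 0

/-- Binomial pmf. -/
def binomPMF (n : ℕ) (p : ℝ) (k : ℕ) : ℝ :=
  (n.choose k : ℝ) * p ^ k * (1 - p) ^ (n - k)

/-- Probability of a set of outcomes under a `Binomial(n,p)` distribution. -/
def binomProb (n : ℕ) (p : ℝ) (E : Set ℕ) : ℝ :=
  ∑ k ∈ Finset.range (n + 1), E.indicator (binomPMF n p) k

/-- Weight of an i.i.d. sample from a distribution on a finite set. -/
def iidWeight {𝒳 : Type} {N : ℕ} (d : 𝒳 → ℝ) (ω : Fin N → 𝒳) : ℝ := ∏ i, d (ω i)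

/-- Probability of an event for `N` i.i.d. draws from `d`. -/
def iidProb {𝒳 : Type} [Fintype 𝒳] {N : ℕ} (d : 𝒳 → ℝ) (E : Set (Fin N → 𝒳)) : ℝ :=
  ∑ ω : Fin N → 𝒳, E.indicator (iidWeight d) ω

/-- Number of occurrences of `x` in the sample `ω`. -/
def iidCount {𝒳 : Type} [DecidableEq 𝒳] {N : ℕ} (ω : Fin N → 𝒳) (x : 𝒳) : ℕ :=
  (Finset.univ.filter fun i => ω i = x).card

/-- Transition kernel of the hard instance `ℳ𝒢_θ`. -/
def hardP {S A B : ℕ} (θ : Fin A → ℝ) : Fin S → Fin A → Fin B → Fin S → ℝ :=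
  fun s a b s' =>
    if s.val = 0 ∧ b.val = 0 then
      θ a * (if s'.val = 0 then 1 else 0) + (1 - θ a) * (if s'.val = 1 then 1 else 0)
    else if s' = s then 1 else 0

/-- Reward of the hard instance: `r(s,a,b) = 1{s = 0}`. -/
def hardR {S A B : ℕ} : Fin S → Fin A → Fin B → ℝ := fun s _ _ => if s.val = 0 then 1 else 0

end ZSMG

/- The penalty depends on `P̂`, so `V_pe^-` and the transitions observed at `x = (s, a, b)` are
dependent, which blocks a direct variance concentration bound. For `γ ≥ 1/2` the empirical
pessimistic operator is nevertheless a `γ`-contraction of the Q-functions with values in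
`[0, 1/(1-γ)]`: the lower bound `2 C_b L / ((1-γ) n)` inside the penalty, `L = log (N/((1-γ)δ))`,
bounds the slope of the square root, and raising `V` costs at most half as much penalty as it gains
in `P̂ V`. Hence `Q_pe^-` is within `1/N` of the fixed point `Q*`. Replacing the entry of the
operator at `x` by a number `u` gives an operator which does not depend on the successors observed
at `x`; its fixed point is `Q*` for `u = Q*(x)` and is 1-Lipschitz in `u`, so letting `u` run over
the grid `{j/N}` produces about `N/(1-γ)` functions one of which is within `2/N` of `V_pe^-`.
Conditionally on the triples and on the successors observed elsewhere, the successors at `x` are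
i.i.d. and each of these functions is frozen; the exponential moment of the squared deviation from
its true mean then bounds its empirical variance by `5/4` of the true one plus `O(L/((1-γ)² n))`.
A union bound over the grid and over the at most `N/4` triples with `N d_b(x) ≥ 8 L` gives the
result for these, a Chernoff bound giving `n ≥ N d_b(x) / 4`; for the other triples the variance is
trivially at most `1/(1-γ)² ≤ 8 L / ((1-γ)² N d_b(x))`. -/

namespace ZSMG

section Variance

variable {𝒮 : Type} [Fintype 𝒮] {p q V W : 𝒮 → ℝ} {H c ε η : ℝ}

lemma Pexp_add (p V W : 𝒮 → ℝ) : Pexp p (V + W) = Pexp p V + Pexp p W :=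
  dotProduct_add p V W

lemma Pexp_sub (p V W : 𝒮 → ℝ) : Pexp p (V - W) = Pexp p V - Pexp p W :=
  dotProduct_sub p V W

lemma Pexp_smul (p V : 𝒮 → ℝ) (c : ℝ) : Pexp p (c • V) = c * Pexp p V :=
  dotProduct_smul c p V

lemma Pexp_const (hp : p ∈ stdSimplex ℝ 𝒮) (c : ℝ) : Pexp p (fun _ => c) = c := by
  rw [Pexp, ← Finset.sum_mul, hp.2, one_mul]

lemma Pexp_mono (hp : p ∈ stdSimplex ℝ 𝒮) (hVW : V ≤ W) : Pexp p V ≤ Pexp p W :=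
  dotProduct_le_dotProduct_of_nonneg_left hVW hp.1

lemma Pexp_mem_Icc (hp : p ∈ stdSimplex ℝ 𝒮)
    (hV : ∀ t, V t ∈ Set.Icc 0 H) : Pexp p V ∈ Set.Icc 0 H := by
  constructor
  · exact (Pexp_const hp 0).ge.trans (Pexp_mono hp fun t => (hV t).1)
  · exact (Pexp_mono hp fun t => (hV t).2).trans (Pexp_const hp H).le

lemma Pexp_add_const (hp : p ∈ stdSimplex ℝ 𝒮) (V : 𝒮 → ℝ) (c : ℝ) :
    Pexp p (fun s => V s + c) = Pexp p V + c := by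
  rw [← Pexp_const hp c, ← Pexp_add, Pexp_const hp]
  rfl

lemma Pexp_sub_sq (hp : p ∈ stdSimplex ℝ 𝒮) (V : 𝒮 → ℝ) (c : ℝ) :
    Pexp p (fun s => (V s - c) ^ 2) = varP p V + (Pexp p V - c) ^ 2 := by
  have expand : (fun s => (V s - c) ^ 2)
      = fun s => ((fun s => V s * V s) - (2 * c) • V) s + c ^ 2 := by
    funext s
    simp only [Pi.sub_apply, Pi.smul_apply, smul_eq_mul]
    ring
  rw [expand, Pexp_add_const hp, Pexp_sub, Pexp_smul, varP]
  ring

lemma varP_le_Pexp_sub_sq (hp : p ∈ stdSimplex ℝ 𝒮) (V : 𝒮 → ℝ) (c : ℝ) :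
    varP p V ≤ Pexp p fun s => (V s - c) ^ 2 := by
  rw [Pexp_sub_sq hp]
  exact le_add_of_nonneg_right (sq_nonneg _)

lemma varP_eq_Pexp_sub_sq (hp : p ∈ stdSimplex ℝ 𝒮) (V : 𝒮 → ℝ) :
    varP p V = Pexp p fun s => (V s - Pexp p V) ^ 2 := by
  rw [Pexp_sub_sq hp, sub_self, zero_pow two_ne_zero, add_zero]

lemma varP_nonneg (hp : p ∈ stdSimplex ℝ 𝒮) (V : 𝒮 → ℝ) : 0 ≤ varP p V := by
  rw [varP_eq_Pexp_sub_sq hp, ← Pexp_const hp 0]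
  exact Pexp_mono hp fun s => sq_nonneg _

lemma varP_le_sq (hp : p ∈ stdSimplex ℝ 𝒮) (hV : ∀ s, V s ∈ Set.Icc 0 H) :
    varP p V ≤ H ^ 2 := by
  refine (varP_le_Pexp_sub_sq hp V 0).trans ?_
  rw [← Pexp_const hp (H ^ 2)]
  exact Pexp_mono hp fun s => by simpa only [sub_zero] using pow_le_pow_left₀ (hV s).1 (hV s).2 2

lemma varP_add_const (hp : p ∈ stdSimplex ℝ 𝒮) (V : 𝒮 → ℝ) (c : ℝ) :
    varP p (fun s => V s + c) = varP p V := by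
  simp only [varP_eq_Pexp_sub_sq hp, Pexp_add_const hp, add_sub_add_right_eq_sub]

lemma varP_le_add_dist_sq (hp : p ∈ stdSimplex ℝ 𝒮) (hη : 0 < η) (V W : 𝒮 → ℝ) :
    varP p V ≤ (1 + η) * varP p W + (1 + η⁻¹) * dist V W ^ 2 := by
  set m := Pexp p W
  have young : ∀ s, (V s - m) ^ 2 ≤ (1 + η) * (W s - m) ^ 2 + (1 + η⁻¹) * dist V W ^ 2 := by
    intro s
    have near : (V s - W s) ^ 2 ≤ dist V W ^ 2 := by
      rw [← sq_abs (V s - W s), ← Real.dist_eq]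
      exact pow_le_pow_left₀ dist_nonneg (dist_le_pi_dist V W s) 2
    have square : (1 + η) * (W s - m) ^ 2 + (1 + η⁻¹) * (V s - W s) ^ 2 - (V s - m) ^ 2
        = η * ((W s - m) - η⁻¹ * (V s - W s)) ^ 2 := by
      field_simp
      ring
    have := mul_nonneg hη.le (sq_nonneg ((W s - m) - η⁻¹ * (V s - W s)))
    have := mul_le_mul_of_nonneg_left near (by positivity : 0 ≤ 1 + η⁻¹)
    linarith
  calc varP p V
      ≤ Pexp p fun s => (V s - m) ^ 2 := varP_le_Pexp_sub_sq hp V m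
    _ ≤ Pexp p fun s => ((1 + η) • fun s => (W s - m) ^ 2) s + (1 + η⁻¹) * dist V W ^ 2 :=
        Pexp_mono hp young
    _ = (1 + η) * varP p W + (1 + η⁻¹) * dist V W ^ 2 := by
        rw [Pexp_add_const hp, Pexp_smul, ← varP_eq_Pexp_sub_sq hp]

lemma varP_sub_varP (p V W : 𝒮 → ℝ) :
    varP p W - varP p V
      = Pexp p fun s => (V s + W s - (Pexp p V + Pexp p W)) * (W s - V s) := by
  have expand : (fun s => (V s + W s - (Pexp p V + Pexp p W)) * (W s - V s))
      = (fun s => W s * W s) - (fun s => V s * V s) - (Pexp p V + Pexp p W) • (W - V) := by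
    funext s
    simp only [Pi.sub_apply, Pi.smul_apply, smul_eq_mul]
    ring
  rw [expand, Pexp_sub, Pexp_sub, Pexp_smul, Pexp_sub, varP, varP]
  ring

lemma varP_sub_varP_le (hp : p ∈ stdSimplex ℝ 𝒮) (hVW : V ≤ W)
    (hV : ∀ s t, V s - V t ≤ H) (hW : ∀ s t, W s - W t ≤ H) :
    varP p W - varP p V ≤ 2 * H * (Pexp p W - Pexp p V) := by
  have sum_osc : ∀ s, V s + W s - (Pexp p V + Pexp p W) ≤ 2 * H := by
    intro s
    have : V s + W s - 2 * H ≤ Pexp p (V + W) := by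
      rw [← Pexp_const hp (V s + W s - 2 * H)]
      exact Pexp_mono hp fun t => by
        simp only [Pi.add_apply]
        linarith [hV s t, hW s t]
    linarith [Pexp_add p V W]
  rw [varP_sub_varP, ← Pexp_sub, ← Pexp_smul]
  exact Pexp_mono hp fun s => mul_le_mul_of_nonneg_right (sum_osc s) (sub_nonneg.2 (hVW s))

/- Both `p` and `q` see `V` only through its proxy `W`; the factor `2` leaves room for the two
applications of `varP_le_add_dist_sq` with `1 + η = 5/4` around the hypothesis on `W`. -/
lemma varP_le_two_mul_varP_add {B : ℝ} (hp : p ∈ stdSimplex ℝ 𝒮) (hq : q ∈ stdSimplex ℝ 𝒮)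
    (hε : dist V W ≤ ε) (hW : varP q W ≤ 5 / 4 * varP p W + B) :
    varP q V ≤ 2 * varP p V + 5 / 4 * B + 13 * ε ^ 2 := by
  have empirical := varP_le_add_dist_sq hq (η := 1 / 4) (by norm_num) V W
  have population := varP_le_add_dist_sq hp (η := 1 / 4) (by norm_num) W V
  rw [dist_comm W V] at population
  have close : dist V W ^ 2 ≤ ε ^ 2 := pow_le_pow_left₀ dist_nonneg hε 2
  linarith [varP_nonneg hp V, sq_nonneg ε]

lemma Pexp_exp_sub_le_one {Y : 𝒮 → ℝ} (hp : p ∈ stdSimplex ℝ 𝒮)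
    (hY : ∀ t, Y t ∈ Set.Icc 0 (1 / 4)) :
    Pexp p (fun t => Real.exp (Y t - 5 / 4 * Pexp p Y)) ≤ 1 := by
  set m := 5 / 4 * Pexp p Y
  have pointwise : ∀ t, Real.exp (Y t) ≤ ((5 / 4 : ℝ) • Y) t + 1 := by
    intro t
    have quadratic := (abs_le.1 (Real.abs_exp_sub_one_sub_id_le
      (abs_le.2 ⟨by linarith [(hY t).1], by linarith [(hY t).2]⟩))).2
    have : Y t ^ 2 ≤ 1 / 4 * Y t := by nlinarith [(hY t).1, (hY t).2]
    rw [Pi.smul_apply, smul_eq_mul]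
    linarith
  calc Pexp p (fun t => Real.exp (Y t - m))
      = Real.exp (-m) * Pexp p (fun t => Real.exp (Y t)) := by
        rw [← Pexp_smul]
        simp only [sub_eq_neg_add, Real.exp_add]
        rfl
    _ ≤ Real.exp (-m) * (m + 1) := by
        refine mul_le_mul_of_nonneg_left ((Pexp_mono hp pointwise).trans_eq ?_) (Real.exp_pos _).le
        rw [Pexp_add_const hp, Pexp_smul]
    _ ≤ Real.exp (-m) * Real.exp m :=
        mul_le_mul_of_nonneg_left (Real.add_one_le_exp m) (Real.exp_pos _).le
    _ = 1 := by rw [← Real.exp_add, neg_add_cancel, Real.exp_zero]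

end Variance

section Penalty

/-- The logarithmic factor `log (N / ((1 - γ) δ))` common to the penalty and to the deviation
bounds. -/
abbrev logFactor (γ δ : ℝ) (N : ℕ) : ℝ := Real.log ((N : ℝ) / ((1 - γ) * δ))

lemma exp_neg_logFactor {γ δ : ℝ} {N : ℕ} (hγ : γ < 1) (hδ : 0 < δ) (hN : 0 < N) :
    Real.exp (-logFactor γ δ N) = (1 - γ) * δ / N := by
  have : 0 < 1 - γ := sub_pos.2 hγ
  rw [Real.exp_neg, Real.exp_log (by positivity), inv_div]

lemma half_le_logFactor {γ δ : ℝ} {N : ℕ} (hγ : γ ∈ Set.Ico (1 / 2) 1) (hδ : δ ∈ Set.Ioo 0 1)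
    (hN : 0 < N) : 1 / 2 ≤ logFactor γ δ N := by
  have hγ_pos : 0 < 1 - γ := sub_pos.2 hγ.2
  have hN_one : (1 : ℝ) ≤ N := by exact_mod_cast hN
  have two_le : 2 ≤ (N : ℝ) / ((1 - γ) * δ) := by
    rw [le_div_iff₀ (mul_pos hγ_pos hδ.1)]
    have := mul_le_of_le_one_right hγ_pos.le hδ.2.le
    linarith [hγ.1]
  linarith [Real.log_le_log two_pos two_le, Real.log_two_gt_d9]

lemma max_sqrt_le_max_sqrt_add {c H v w d : ℝ} (hc : 0 ≤ c) (hd : 0 ≤ d)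
    (hvw : w ≤ v + 4 * H * d) :
    max (√(c * w)) (2 * c * H) ≤ max (√(c * v)) (2 * c * H) + d := by
  set G := max (√(c * v)) (2 * c * H)
  have hG : 2 * c * H ≤ G := le_max_right _ _
  have hG_nonneg : 0 ≤ G := (Real.sqrt_nonneg _).trans (le_max_left _ _)
  refine max_le (Real.sqrt_le_iff.2 ⟨by positivity, ?_⟩) (by linarith)
  have hv : c * v ≤ G ^ 2 := (Real.sqrt_le_left hG_nonneg).1 (le_max_left _ _)
  calc c * w ≤ c * v + 2 * (2 * c * H) * d := by linarith [mul_le_mul_of_nonneg_left hvw hc]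
    _ ≤ G ^ 2 + 2 * G * d + d ^ 2 := by
        have := mul_le_mul_of_nonneg_right hG hd
        linarith [sq_nonneg d]
    _ = (G + d) ^ 2 := by ring

variable {𝒮 : Type} [Fintype 𝒮] {γ δ Cb e : ℝ} {N n : ℕ} {p V W : 𝒮 → ℝ}

lemma penalty_nonneg (hγ : γ < 1) : 0 ≤ penalty γ δ Cb N n p V := by
  have : 0 < 1 - γ := sub_pos.2 hγ
  unfold penalty
  split_ifs
  · positivity
  · exact add_nonneg (le_min (le_max_of_le_left (Real.sqrt_nonneg _)) (by positivity))
      (by positivity)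

lemma penalty_add_const (hp : p ∈ stdSimplex ℝ 𝒮) (c : ℝ) :
    penalty γ δ Cb N n p (fun s => V s + c) = penalty γ δ Cb N n p V := by
  simp only [penalty, varP_add_const hp]

lemma penalty_le_penalty_add (hγ : γ < 1) (hCb : 0 ≤ Cb) (hL : 0 ≤ logFactor γ δ N)
    (hp : p ∈ stdSimplex ℝ 𝒮) (hVW : V ≤ W) (hV : ∀ s t, V s - V t ≤ 1 / (1 - γ))
    (hW : ∀ s t, W s - W t ≤ 1 / (1 - γ)) :
    penalty γ δ Cb N n p W ≤ penalty γ δ Cb N n p V + (Pexp p W - Pexp p V) / 2 := by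
  have : 0 ≤ 1 / (1 - γ) := one_div_nonneg.2 (sub_nonneg.2 hγ.le)
  have hd : 0 ≤ (Pexp p W - Pexp p V) / 2 :=
    div_nonneg (sub_nonneg.2 (Pexp_mono hp hVW)) zero_le_two
  unfold penalty
  split_ifs with hn
  · linarith
  have sqrt_arg : ∀ v, Cb * logFactor γ δ N * v / n = Cb * logFactor γ δ N / n * v :=
    fun v => by ring
  have linear_term : 2 * Cb * logFactor γ δ N / ((1 - γ) * n)
      = 2 * (Cb * logFactor γ δ N / n) * (1 / (1 - γ)) := by
    rw [div_mul_eq_div_div]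
    ring
  rw [sqrt_arg, sqrt_arg, linear_term, add_right_comm]
  refine add_le_add_left ?_ _
  rw [← min_add_add_right]
  refine min_le_min (max_sqrt_le_max_sqrt_add (by positivity) hd ?_) (le_add_of_nonneg_right hd)
  linarith [varP_sub_varP_le hp hVW hV hW]

lemma backup_le_backup_add (hγ : γ ∈ Set.Ico (1 / 2) 1) (hCb : 0 ≤ Cb)
    (hL : 0 ≤ logFactor γ δ N) (hp : p ∈ stdSimplex ℝ 𝒮) (hWV : ∀ s, W s ≤ V s + e)
    (hV : ∀ s t, V s - V t ≤ 1 / (1 - γ)) (hW : ∀ s t, W s - W t ≤ 1 / (1 - γ)) :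
    γ * Pexp p W - penalty γ δ Cb N n p W
      ≤ γ * Pexp p V - penalty γ δ Cb N n p V + γ * e := by
  have shift := penalty_le_penalty_add (n := n) hγ.2 hCb hL hp hWV hW
    fun s t => by simpa only [add_sub_add_right_eq_sub] using hV s t
  have gap : 0 ≤ Pexp p (fun s => V s + e) - Pexp p W := sub_nonneg.2 (Pexp_mono hp hWV)
  have := mul_le_mul_of_nonneg_right hγ.1 gap
  rw [penalty_add_const hp] at shift
  rw [Pexp_add_const hp] at shift this
  linarith

end Penalty

section MatrixGame

variable {𝒮 𝒜 ℬ : Type} [Fintype 𝒜] [Fintype ℬ]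

lemma dist_le_iff_forall_triple [Fintype 𝒮] {Q R : 𝒮 → 𝒜 → ℬ → ℝ} {e : ℝ} (he : 0 ≤ e) :
    dist Q R ≤ e ↔ ∀ s a b, dist (Q s a b) (R s a b) ≤ e := by
  simp only [dist_pi_le_iff he]

lemma abs_pay_le {M : 𝒜 → ℬ → ℝ} {w : 𝒜 → ℝ} {z : ℬ → ℝ}
    (hw : w ∈ stdSimplex ℝ 𝒜) (hz : z ∈ stdSimplex ℝ ℬ) :
    |pay M w z| ≤ ∑ a, ∑ b, |M a b| := by
  refine (Finset.abs_sum_le_sum_abs _ _).trans (Finset.sum_le_sum fun a _ => ?_)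
  refine (Finset.abs_sum_le_sum_abs _ _).trans (Finset.sum_le_sum fun b _ => ?_)
  have hwa := mem_Icc_of_mem_stdSimplex hw a
  have hzb := mem_Icc_of_mem_stdSimplex hz b
  rw [abs_mul, abs_of_nonneg (mul_nonneg hwa.1 hzb.1)]
  exact mul_le_of_le_one_left (abs_nonneg _) (mul_le_one₀ hwa.2 hzb.1 hzb.2)

lemma pay_le_pay_add {M M' : 𝒜 → ℬ → ℝ} {e : ℝ} {w : 𝒜 → ℝ} {z : ℬ → ℝ}
    (hw : w ∈ stdSimplex ℝ 𝒜) (hz : z ∈ stdSimplex ℝ ℬ) (h : ∀ a b, M a b ≤ M' a b + e) :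
    pay M w z ≤ pay M' w z + e := by
  have shift : ∑ a, ∑ b, w a * z b * (M' a b + e) = pay M' w z + e := by
    simp only [mul_add, Finset.sum_add_distrib, pay, ← Finset.sum_mul, ← Finset.mul_sum,
      hz.2, hw.2, mul_one, one_mul]
  rw [← shift]
  exact Finset.sum_le_sum fun a _ => Finset.sum_le_sum fun b _ =>
    mul_le_mul_of_nonneg_left (h a b) (mul_nonneg (hw.1 a) (hz.1 b))

lemma bddBelow_range_pay (M : 𝒜 → ℬ → ℝ) (w : stdSimplex ℝ 𝒜) :
    BddBelow (Set.range fun z : stdSimplex ℝ ℬ => pay M w.1 z.1) :=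
  ⟨-∑ a, ∑ b, |M a b|, Set.forall_mem_range.2 fun z => (abs_le.1 (abs_pay_le w.2 z.2)).1⟩

variable [Nonempty ℬ]

lemma bddAbove_range_iInf_pay (M : 𝒜 → ℬ → ℝ) :
    BddAbove (Set.range fun w : stdSimplex ℝ 𝒜 => ⨅ z : stdSimplex ℝ ℬ, pay M w.1 z.1) := by
  have z : stdSimplex ℝ ℬ := Classical.arbitrary _
  exact ⟨∑ a, ∑ b, |M a b|, Set.forall_mem_range.2 fun w =>
    (ciInf_le (bddBelow_range_pay M w) z).trans (abs_le.1 (abs_pay_le w.2 z.2)).2⟩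

variable [Nonempty 𝒜] {Q R : 𝒮 → 𝒜 → ℬ → ℝ} {H e : ℝ}

lemma valQ_le_valQ_add {s : 𝒮} (h : ∀ a b, Q s a b ≤ R s a b + e) :
    valQ Q s ≤ valQ R s + e := by
  refine ciSup_le fun w => ?_
  have guarantee : (⨅ z : stdSimplex ℝ ℬ, pay (Q s) w.1 z.1) - e
      ≤ ⨅ z : stdSimplex ℝ ℬ, pay (R s) w.1 z.1 := le_ciInf fun z => by
    linarith [ciInf_le (bddBelow_range_pay (Q s) w) z, pay_le_pay_add w.2 z.2 h]
  exact sub_le_iff_le_add.1 (guarantee.trans (le_ciSup (bddAbove_range_iInf_pay (R s)) w))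

lemma valQ_zero (s : 𝒮) : valQ (0 : 𝒮 → 𝒜 → ℬ → ℝ) s = 0 := by
  simp [valQ, pay]

lemma valQ_mem_Icc {s : 𝒮} (hQ : ∀ a b, Q s a b ∈ Set.Icc 0 H) : valQ Q s ∈ Set.Icc 0 H := by
  constructor
  · simpa only [valQ_zero, add_zero] using valQ_le_valQ_add (Q := 0) (R := Q) (e := 0)
      fun a b => by simpa using (hQ a b).1
  · simpa only [valQ_zero, zero_add] using valQ_le_valQ_add (Q := Q) (R := 0) (e := H)
      fun a b => by simpa using (hQ a b).2

variable [Fintype 𝒮]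

lemma dist_valQ_le (Q R : 𝒮 → 𝒜 → ℬ → ℝ) : dist (valQ Q) (valQ R) ≤ dist Q R := by
  have entry := (dist_le_iff_forall_triple dist_nonneg).1 (le_refl (dist Q R))
  refine (dist_pi_le_iff dist_nonneg).2 fun s => abs_sub_le_iff.2 ⟨?_, ?_⟩ <;>
    rw [sub_le_iff_le_add'] <;>
    refine valQ_le_valQ_add fun a b => ?_
  · linarith [(abs_sub_le_iff.1 (entry s a b)).1]
  · linarith [(abs_sub_le_iff.1 (entry s a b)).2]

end MatrixGame

section Contraction

variable {X : Type*} [MetricSpace X] {γ : ℝ} {T : X → X} {s : Set X}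

/-- `T` maps `s` to itself and contracts distances between points of `s` by the factor `γ`. -/
structure IsContractionOn (γ : ℝ) (T : X → X) (s : Set X) : Prop where
  mapsTo : Set.MapsTo T s s
  dist_le : ∀ ⦃x⦄, x ∈ s → ∀ ⦃y⦄, y ∈ s → dist (T x) (T y) ≤ γ * dist x y

/-- A fixed point of `T` in `s`, arbitrary if there is none. Being a function of `T`, it is the
same for two datasets that define the same operator. -/
def fixedPointOn [Nonempty X] (T : X → X) (s : Set X) : X :=
  Classical.epsilon fun x => x ∈ s ∧ Function.IsFixedPt T x

namespace IsContractionOn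

lemma dist_iterate_le (hT : IsContractionOn γ T s) (hγ : 0 ≤ γ) {x y : X} (hx : x ∈ s)
    (hy : y ∈ s) (k : ℕ) : dist (T^[k] x) (T^[k] y) ≤ γ ^ k * dist x y := by
  induction k with
  | zero => simp
  | succ k ih =>
    rw [Function.iterate_succ_apply', Function.iterate_succ_apply', pow_succ', mul_assoc]
    exact (hT.dist_le (hT.mapsTo.iterate k hx) (hT.mapsTo.iterate k hy)).trans
      (mul_le_mul_of_nonneg_left ih hγ)

lemma exists_isFixedPt (hT : IsContractionOn γ T s) (hγ : γ ∈ Set.Ico 0 1) (hs : IsComplete s)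
    (hne : s.Nonempty) : ∃ x ∈ s, Function.IsFixedPt T x := by
  obtain ⟨x, hx⟩ := hne
  have contracting : ContractingWith ⟨γ, hγ.1⟩ (hT.mapsTo.restrict T s s) :=
    ⟨hγ.2, (LipschitzOnWith.of_dist_le_mul fun x hx y hy =>
      hT.dist_le hx hy).mapsToRestrict hT.mapsTo⟩
  obtain ⟨y, hy, hfix, -⟩ := contracting.exists_fixedPoint' hs hT.mapsTo hx (edist_ne_top _ _)
  exact ⟨y, hy, hfix⟩

variable [Nonempty X]

lemma fixedPointOn_spec (hT : IsContractionOn γ T s) (hγ : γ ∈ Set.Ico 0 1)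
    (hs : IsComplete s) (hne : s.Nonempty) :
    fixedPointOn T s ∈ s ∧ Function.IsFixedPt T (fixedPointOn T s) :=
  Classical.epsilon_spec (hT.exists_isFixedPt hγ hs hne)

lemma dist_iterate_fixedPointOn_le (hT : IsContractionOn γ T s) (hγ : γ ∈ Set.Ico 0 1)
    (hs : IsComplete s) {x : X} (hx : x ∈ s) (k : ℕ) :
    dist (T^[k] x) (fixedPointOn T s) ≤ γ ^ k * dist x (fixedPointOn T s) := by
  obtain ⟨mem, fixed⟩ := hT.fixedPointOn_spec hγ hs ⟨x, hx⟩
  simpa only [fixed.iterate k |>.eq] using hT.dist_iterate_le hγ.1 hx mem k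

end IsContractionOn

end Contraction

section Pinning

variable {𝒮 𝒜 ℬ : Type}

/-- The functions on state-action triples with values in `[0, H]`, where all Q-functions of the
algorithm live. -/
def qBox (𝒮 𝒜 ℬ : Type) (H : ℝ) : Set (𝒮 → 𝒜 → ℬ → ℝ) :=
  {Q | ∀ s a b, Q s a b ∈ Set.Icc 0 H}

lemma zero_mem_qBox {H : ℝ} (hH : 0 ≤ H) : 0 ∈ qBox 𝒮 𝒜 ℬ H :=
  fun _ _ _ => Set.left_mem_Icc.2 hH

lemma isClosed_qBox (H : ℝ) : IsClosed (qBox 𝒮 𝒜 ℬ H) := by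
  simp only [qBox, Set.ofPred_forall]
  exact isClosed_iInter fun s => isClosed_iInter fun a => isClosed_iInter fun b =>
    isClosed_Icc.preimage (by fun_prop)

lemma dist_zero_le_of_mem_qBox [Fintype 𝒮] [Fintype 𝒜] [Fintype ℬ] {H : ℝ} (hH : 0 ≤ H)
    {Q : 𝒮 → 𝒜 → ℬ → ℝ} (hQ : Q ∈ qBox 𝒮 𝒜 ℬ H) :
    dist 0 Q ≤ H :=
  (dist_le_iff_forall_triple hH).2 fun s a b => by
    simpa only [Pi.zero_apply, dist_zero_left, Real.norm_of_nonneg (hQ s a b).1] using (hQ s a b).2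

variable [DecidableEq 𝒮] [DecidableEq 𝒜] [DecidableEq ℬ]

/-- The operator `T` with its output at the triple `x` replaced by the number `u`, so that it
forgets everything `T` knows about `x`. -/
def pinned (T : (𝒮 → 𝒜 → ℬ → ℝ) → 𝒮 → 𝒜 → ℬ → ℝ) (x : 𝒮 × 𝒜 × ℬ) (u : ℝ) :
    (𝒮 → 𝒜 → ℬ → ℝ) → 𝒮 → 𝒜 → ℬ → ℝ :=
  fun Q s a b => if (s, a, b) = x then u else T Q s a b

variable {T : (𝒮 → 𝒜 → ℬ → ℝ) → 𝒮 → 𝒜 → ℬ → ℝ}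

lemma isFixedPt_pinned_self {Q : 𝒮 → 𝒜 → ℬ → ℝ} (hQ : Function.IsFixedPt T Q)
    (x : 𝒮 × 𝒜 × ℬ) : Function.IsFixedPt (pinned T x (Q x.1 x.2.1 x.2.2)) Q := by
  funext s a b
  unfold pinned
  split_ifs with h
  · rw [← h]
  · rw [hQ.eq]

variable [Fintype 𝒮] [Fintype 𝒜] [Fintype ℬ] {γ H u u' : ℝ} {x : 𝒮 × 𝒜 × ℬ}

lemma IsContractionOn.pinned (hT : IsContractionOn γ T (qBox 𝒮 𝒜 ℬ H)) (hγ : 0 ≤ γ)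
    (hu : u ∈ Set.Icc 0 H) : IsContractionOn γ (ZSMG.pinned T x u) (qBox 𝒮 𝒜 ℬ H) where
  mapsTo Q hQ s a b := by
    unfold ZSMG.pinned
    split_ifs
    exacts [hu, hT.mapsTo hQ s a b]
  dist_le Q hQ R hR := by
    have bound_nonneg : 0 ≤ γ * dist Q R := mul_nonneg hγ dist_nonneg
    refine (dist_le_iff_forall_triple bound_nonneg).2 fun s a b => ?_
    unfold ZSMG.pinned
    split_ifs
    · rwa [dist_self]
    · exact (dist_le_iff_forall_triple bound_nonneg).1 (hT.dist_le hQ hR) s a b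

lemma dist_le_of_isFixedPt_pinned (hT : IsContractionOn γ T (qBox 𝒮 𝒜 ℬ H)) (hγ : γ < 1)
    {Q R : 𝒮 → 𝒜 → ℬ → ℝ} (hQ : Q ∈ qBox 𝒮 𝒜 ℬ H) (hR : R ∈ qBox 𝒮 𝒜 ℬ H)
    (hQu : Function.IsFixedPt (pinned T x u) Q) (hRu : Function.IsFixedPt (pinned T x u') R) :
    dist Q R ≤ dist u u' := by
  have entry : dist Q R ≤ max (dist u u') (γ * dist Q R) := by
    refine (dist_le_iff_forall_triple (dist_nonneg.trans (le_max_left _ _))).2 fun s a b => ?_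
    rw [← hQu.eq, ← hRu.eq, pinned, pinned, hQu.eq, hRu.eq]
    split_ifs
    · exact le_max_left _ _
    · have contract := hT.dist_le hQ hR
      exact ((dist_le_iff_forall_triple (dist_nonneg.trans contract)).1 contract s a b).trans
        (le_max_right _ _)
  rcases le_max_iff.1 entry with h | h
  · exact h
  · have : dist Q R ≤ 0 := by nlinarith [dist_nonneg (x := Q) (y := R)]
    exact this.trans dist_nonneg

lemma natCast_div_mem_Icc {N j : ℕ} (hN : 0 < N) (hH : 0 ≤ H)
    (hj : j ∈ Finset.range (⌊H * N⌋₊ + 1)) : (j / N : ℝ) ∈ Set.Icc 0 H :=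
  ⟨by positivity, (div_le_iff₀ (Nat.cast_pos.2 hN)).2
    ((Nat.le_floor_iff (by positivity)).1 (Finset.mem_range_succ_iff.1 hj))⟩

lemma exists_natCast_div_near {N : ℕ} (hN : 0 < N) (hu : u ∈ Set.Icc 0 H) :
    ∃ j ∈ Finset.range (⌊H * N⌋₊ + 1), dist u (j / N) ≤ 1 / N := by
  have hN' : (0 : ℝ) < N := Nat.cast_pos.2 hN
  have below : (⌊u * N⌋₊ : ℝ) / N ≤ u :=
    (div_le_iff₀ hN').2 (Nat.floor_le (mul_nonneg hu.1 hN'.le))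
  have above : u ≤ (⌊u * N⌋₊ + 1) / N := (le_div_iff₀ hN').2 (Nat.lt_floor_add_one _).le
  refine ⟨⌊u * N⌋₊, Finset.mem_range_succ_iff.2 ?_, ?_⟩
  · exact Nat.floor_le_floor (mul_le_mul_of_nonneg_right hu.2 hN'.le)
  · rw [Real.dist_eq, abs_of_nonneg (sub_nonneg.2 below)]
    rw [add_div] at above
    linarith

/- `Q*`, the fixed point of `T`, is also the fixed point of `T` pinned at `u = Q* x`, and moving
`u` to the grid moves the fixed point by at most the mesh. -/
lemma exists_dist_iterate_fixedPointOn_pinned_le (hT : IsContractionOn γ T (qBox 𝒮 𝒜 ℬ H))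
    (hγ : γ ∈ Set.Ico 0 1) (hH : 0 ≤ H) {N : ℕ} (hN : 0 < N) (k : ℕ) (x : 𝒮 × 𝒜 × ℬ) :
    ∃ j ∈ Finset.range (⌊H * N⌋₊ + 1),
      dist (T^[k] 0) (fixedPointOn (pinned T x (j / N)) (qBox 𝒮 𝒜 ℬ H)) ≤ γ ^ k * H + 1 / N := by
  have complete := (isClosed_qBox (𝒮 := 𝒮) (𝒜 := 𝒜) (ℬ := ℬ) H).isComplete
  have zero_mem : 0 ∈ qBox 𝒮 𝒜 ℬ H := zero_mem_qBox hH
  obtain ⟨mem, fixed⟩ := hT.fixedPointOn_spec hγ complete ⟨0, zero_mem⟩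
  set Qstar := fixedPointOn T (qBox 𝒮 𝒜 ℬ H)
  obtain ⟨j, hj, near⟩ := exists_natCast_div_near hN (mem x.1 x.2.1 x.2.2)
  obtain ⟨memj, fixedj⟩ := (hT.pinned (x := x) hγ.1
    (natCast_div_mem_Icc hN hH hj)).fixedPointOn_spec hγ complete ⟨0, zero_mem⟩
  have to_grid :=
    dist_le_of_isFixedPt_pinned hT hγ.2 mem memj (isFixedPt_pinned_self fixed x) fixedj
  have iterate : dist (T^[k] 0) Qstar ≤ γ ^ k * H :=
    (hT.dist_iterate_fixedPointOn_le hγ complete zero_mem k).trans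
      (mul_le_mul_of_nonneg_left (dist_zero_le_of_mem_qBox hH mem) (pow_nonneg hγ.1 k))
  exact ⟨j, hj, (dist_triangle _ Qstar _).trans (add_le_add iterate (to_grid.trans near))⟩

end Pinning

section PessimisticOperator

variable {𝒮 𝒜 ℬ : Type} [Fintype 𝒮] [Fintype 𝒜] [Fintype ℬ] [Nonempty 𝒜] [Nonempty ℬ]
  {γ δ Cb : ℝ} {N : ℕ} {n : 𝒮 → 𝒜 → ℬ → ℕ} {Ph : 𝒮 → 𝒜 → ℬ → 𝒮 → ℝ} {rh : 𝒮 → 𝒜 → ℬ → ℝ}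

lemma TpeMinus_mem_qBox (hγ : γ ∈ Set.Ico 0 1) (hPh : IsKernel Ph) (hrh : IsReward rh)
    {Q : 𝒮 → 𝒜 → ℬ → ℝ} (hQ : Q ∈ qBox 𝒮 𝒜 ℬ (1 / (1 - γ))) :
    TpeMinus γ δ Cb N n Ph rh Q ∈ qBox 𝒮 𝒜 ℬ (1 / (1 - γ)) := by
  intro s a b
  have hγ_pos : 0 < 1 - γ := sub_pos.2 hγ.2
  refine ⟨le_max_right _ _, max_le ?_ (by positivity)⟩
  have value : Pexp (Ph s a b) (valQ Q) ≤ 1 / (1 - γ) :=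
    (Pexp_mem_Icc (hPh s a b) fun t => valQ_mem_Icc (hQ t)).2
  have horizon : 1 + γ * (1 / (1 - γ)) = 1 / (1 - γ) := by
    field_simp
    ring
  linarith [(hrh s a b).2, mul_le_mul_of_nonneg_left value hγ.1,
    penalty_nonneg (δ := δ) (Cb := Cb) (N := N) (n := n s a b) (p := Ph s a b) (V := valQ Q) hγ.2]

lemma TpeMinus_le_TpeMinus_add (hγ : γ ∈ Set.Ico (1 / 2) 1) (hCb : 0 ≤ Cb)
    (hL : 0 ≤ logFactor γ δ N) (hPh : IsKernel Ph) {Q R : 𝒮 → 𝒜 → ℬ → ℝ}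
    (hQ : Q ∈ qBox 𝒮 𝒜 ℬ (1 / (1 - γ))) (hR : R ∈ qBox 𝒮 𝒜 ℬ (1 / (1 - γ)))
    (s : 𝒮) (a : 𝒜) (b : ℬ) :
    TpeMinus γ δ Cb N n Ph rh Q s a b ≤ TpeMinus γ δ Cb N n Ph rh R s a b + γ * dist Q R := by
  have oscillation : ∀ {Q : 𝒮 → 𝒜 → ℬ → ℝ}, Q ∈ qBox 𝒮 𝒜 ℬ (1 / (1 - γ)) →
      ∀ s t, valQ Q s - valQ Q t ≤ 1 / (1 - γ) := fun hQ s t => by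
    linarith [(valQ_mem_Icc (hQ s)).2, (valQ_mem_Icc (hQ t)).1]
  have close : ∀ t, valQ Q t ≤ valQ R t + dist Q R := fun t => by
    linarith [(abs_sub_le_iff.1 ((dist_le_pi_dist _ _ t).trans (dist_valQ_le Q R))).1]
  have backup := backup_le_backup_add (n := n s a b) hγ hCb hL (hPh s a b) close
    (oscillation hR) (oscillation hQ)
  have gap_nonneg : 0 ≤ γ * dist Q R :=
    mul_nonneg (one_half_pos.le.trans hγ.1) dist_nonneg
  unfold TpeMinus
  rw [← max_add_add_right]
  exact max_le_max (by linarith) (by linarith)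

lemma isContractionOn_TpeMinus (hγ : γ ∈ Set.Ico (1 / 2) 1) (hCb : 0 ≤ Cb)
    (hL : 0 ≤ logFactor γ δ N) (hPh : IsKernel Ph) (hrh : IsReward rh) :
    IsContractionOn γ (TpeMinus γ δ Cb N n Ph rh) (qBox 𝒮 𝒜 ℬ (1 / (1 - γ))) where
  mapsTo _ hQ := TpeMinus_mem_qBox ⟨one_half_pos.le.trans hγ.1, hγ.2⟩ hPh hrh hQ
  dist_le Q hQ R hR := by
    have hγ_nonneg : 0 ≤ γ := one_half_pos.le.trans hγ.1
    refine (dist_le_iff_forall_triple (mul_nonneg hγ_nonneg dist_nonneg)).2 fun s a b => ?_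
    have QR := TpeMinus_le_TpeMinus_add (n := n) (rh := rh) hγ hCb hL hPh hQ hR s a b
    have RQ := TpeMinus_le_TpeMinus_add (n := n) (rh := rh) hγ hCb hL hPh hR hQ s a b
    rw [dist_comm R Q] at RQ
    exact abs_sub_le_iff.2 ⟨by linarith, by linarith⟩

end PessimisticOperator

lemma pow_natCeil_log_div_log_le {γ x : ℝ} (hγ : γ ∈ Set.Ioo 0 1) (hx : 0 < x) :
    γ ^ ⌈Real.log x / Real.log (1 / γ)⌉₊ ≤ x⁻¹ := by
  have hlog : 0 < Real.log (1 / γ) := Real.log_pos ((one_lt_div hγ.1).2 hγ.2)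
  have exponent := (div_le_iff₀ hlog).1 (Nat.le_ceil (Real.log x / Real.log (1 / γ)))
  have hγ_pos := hγ.1
  rw [← Real.log_le_log_iff (by positivity) (by positivity), Real.log_pow, Real.log_inv]
  rw [one_div, Real.log_inv] at exponent ⊢
  linarith

lemma pow_Titer_mul_le {γ : ℝ} {N : ℕ} (hγ : γ ∈ Set.Ioo 0 1) (hN : 0 < N) :
    γ ^ Titer γ N * (1 / (1 - γ)) ≤ 1 / N := by
  have hγ_pos : 0 < 1 - γ := sub_pos.2 hγ.2
  calc γ ^ Titer γ N * (1 / (1 - γ))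
      ≤ (N / (1 - γ))⁻¹ * (1 / (1 - γ)) :=
        mul_le_mul_of_nonneg_right (pow_natCeil_log_div_log_le hγ (by positivity)) (by positivity)
    _ = 1 / N := by field_simp

section Probability

variable {𝒮 𝒜 ℬ : Type} [Fintype 𝒮] [Fintype 𝒜] [Fintype ℬ] {N : ℕ}
  {db : 𝒮 → 𝒜 → ℬ → ℝ} {P : 𝒮 → 𝒜 → ℬ → 𝒮 → ℝ}

/-- The state-action triple of a transition. -/
def triple {𝒮 𝒜 ℬ : Type} (y : 𝒮 × 𝒜 × ℬ × 𝒮) : 𝒮 × 𝒜 × ℬ := (y.1, y.2.1, y.2.2.1)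

lemma IsDist3.sum_triple_eq_one (hdb : IsDist3 db) :
    ∑ x : 𝒮 × 𝒜 × ℬ, db x.1 x.2.1 x.2.2 = 1 := by
  simpa only [Fintype.sum_prod_type] using hdb.2

lemma IsDist3.sum_le_one (hdb : IsDist3 db) (K : Finset (𝒮 × 𝒜 × ℬ)) :
    ∑ x ∈ K, db x.1 x.2.1 x.2.2 ≤ 1 := by
  rw [← hdb.sum_triple_eq_one]
  exact Finset.sum_le_univ_sum_of_nonneg fun x => hdb.1 _ _ _

lemma IsDist3.le_one (hdb : IsDist3 db) (s : 𝒮) (a : 𝒜) (b : ℬ) : db s a b ≤ 1 := by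
  simpa only [Finset.sum_singleton] using hdb.sum_le_one {(s, a, b)}

lemma dsExp_prod_triple (hP : IsKernel P) (g : 𝒮 × 𝒜 × ℬ → ℝ) :
    dsExp db P (fun D : Fin N → 𝒮 × 𝒜 × ℬ × 𝒮 => ∏ i, g (triple (D i)))
      = (∑ x : 𝒮 × 𝒜 × ℬ, db x.1 x.2.1 x.2.2 * g x) ^ N := by
  have one_draw : ∑ y : 𝒮 × 𝒜 × ℬ × 𝒮,
      db y.1 y.2.1 y.2.2.1 * P y.1 y.2.1 y.2.2.1 y.2.2.2 * g (triple y)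
        = ∑ x : 𝒮 × 𝒜 × ℬ, db x.1 x.2.1 x.2.2 * g x := by
    simp only [Fintype.sum_prod_type, triple, ← Finset.sum_mul, ← Finset.mul_sum, (hP _ _ _).2,
      mul_one]
  simp only [dsExp, dsWeight, ← Finset.prod_mul_distrib]
  rw [← one_draw, ← Fintype.prod_sum fun (_ : Fin N) y =>
    db y.1 y.2.1 y.2.2.1 * P y.1 y.2.1 y.2.2.1 y.2.2.2 * g (triple y), Finset.prod_const,
    Finset.card_univ, Fintype.card_fin]

lemma dsExp_one (hP : IsKernel P) (hdb : IsDist3 db) :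
    dsExp db P (fun _ : Fin N → 𝒮 × 𝒜 × ℬ × 𝒮 => 1) = 1 := by
  simpa only [Finset.prod_const_one, mul_one, hdb.sum_triple_eq_one, one_pow] using
    dsExp_prod_triple (N := N) (db := db) hP fun _ => 1

lemma dsWeight_nonneg (hP : IsKernel P) (hdb : IsDist3 db) (D : Fin N → 𝒮 × 𝒜 × ℬ × 𝒮) :
    0 ≤ dsWeight db P D :=
  Finset.prod_nonneg fun _ _ => mul_nonneg (hdb.1 _ _ _) ((hP _ _ _).1 _)

lemma dsProb_mono (hP : IsKernel P) (hdb : IsDist3 db) {E F : Set (Fin N → 𝒮 × 𝒜 × ℬ × 𝒮)}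
    (h : E ⊆ F) : dsProb db P E ≤ dsProb db P F :=
  Finset.sum_le_sum fun D _ =>
    Set.indicator_le_indicator_of_subset h (fun D => dsWeight_nonneg hP hdb D) D

lemma dsProb_empty : dsProb db P (∅ : Set (Fin N → 𝒮 × 𝒜 × ℬ × 𝒮)) = 0 := by
  simp only [dsProb, Set.indicator_empty, Finset.sum_const_zero]

lemma dsProb_compl (hP : IsKernel P) (hdb : IsDist3 db) (E : Set (Fin N → 𝒮 × 𝒜 × ℬ × 𝒮)) :
    dsProb db P Eᶜ = 1 - dsProb db P E := by
  rw [eq_sub_iff_add_eq', ← dsExp_one (N := N) hP hdb]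
  simp only [dsProb, dsExp, ← Finset.sum_add_distrib, Set.indicator_self_add_compl_apply, mul_one]

lemma dsProb_union_le (hP : IsKernel P) (hdb : IsDist3 db)
    (E F : Set (Fin N → 𝒮 × 𝒜 × ℬ × 𝒮)) :
    dsProb db P (E ∪ F) ≤ dsProb db P E + dsProb db P F := by
  simp only [dsProb, ← Finset.sum_add_distrib]
  refine Finset.sum_le_sum fun D _ => ?_
  rw [← Set.indicator_union_add_inter_apply]
  exact le_add_of_nonneg_right (Set.indicator_nonneg (fun D _ => dsWeight_nonneg hP hdb D) D)

lemma dsProb_biUnion_le (hP : IsKernel P) (hdb : IsDist3 db) {κ : Type*} (K : Finset κ)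
    (E : κ → Set (Fin N → 𝒮 × 𝒜 × ℬ × 𝒮)) :
    dsProb db P (⋃ k ∈ K, E k) ≤ ∑ k ∈ K, dsProb db P (E k) := by
  induction K using Finset.induction_on with
  | empty => simp [dsProb_empty]
  | insert k K hk ih =>
    rw [Finset.set_biUnion_insert, Finset.sum_insert hk]
    exact (dsProb_union_le hP hdb _ _).trans (add_le_add_right ih _)

lemma dsProb_le_exp_neg_mul_dsExp_exp (hP : IsKernel P) (hdb : IsDist3 db)
    (f : (Fin N → 𝒮 × 𝒜 × ℬ × 𝒮) → ℝ) (c : ℝ) :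
    dsProb db P {D | c ≤ f D} ≤ Real.exp (-c) * dsExp db P fun D => Real.exp (f D) := by
  rw [dsExp, Finset.mul_sum]
  refine Finset.sum_le_sum fun D _ => Set.indicator_apply_le' (fun hD => ?_) fun _ => ?_
  · rw [mul_left_comm, ← Real.exp_add]
    exact le_mul_of_one_le_right (dsWeight_nonneg hP hdb D)
      (Real.one_le_exp (by linarith [show c ≤ f D from hD]))
  · have := dsWeight_nonneg hP hdb D
    positivity

end Probability

section Decoupling

variable {ι Y : Type*} [Fintype ι] [DecidableEq ι] [Fintype Y]

lemma sum_prod_apply_le_one {f : ι → Y → ℝ} (hf : ∀ i y, 0 ≤ f i y)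
    (hf_sum : ∀ i, ∑ y, f i y ≤ 1) :
    ∑ z : ι → Y, ∏ i, f i (z i) ≤ 1 := by
  rw [← Fintype.prod_sum]
  exact Finset.prod_le_one (fun i _ => Finset.sum_nonneg fun y _ => hf i y) fun i _ => hf_sum i

/- Conditionally on the coordinates outside `I`, the factor `ψ z` is frozen and the coordinates in
`I` are still independent. -/
lemma sum_prod_mul_prod_ite_le_one {p : ι → Y → ℝ} (hp : ∀ i, p i ∈ stdSimplex ℝ Y)
    (I : ι → Prop) [DecidablePred I] {ψ : (ι → Y) → Y → ℝ}
    (hψ : ∀ z z', (∀ i, ¬ I i → z i = z' i) → ψ z = ψ z') (hψ_nonneg : ∀ z y, 0 ≤ ψ z y)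
    (hψ_sum : ∀ z i, I i → ∑ y, p i y * ψ z y ≤ 1) :
    ∑ z : ι → Y, (∏ i, p i (z i)) * ∏ i, (if I i then ψ z (z i) else 1) ≤ 1 := by
  let glue := (Equiv.piEquivPiSubtypeProd I fun _ => Y).symm
  have glue_in : ∀ z₁ z₂ (i : {i // I i}), glue (z₁, z₂) i = z₁ i := fun z₁ z₂ i => by
    simp only [glue, Equiv.piEquivPiSubtypeProd_symm_apply, i.2, dite_true]
  have glue_out : ∀ z₁ z₂ (i : {i // ¬ I i}), glue (z₁, z₂) i = z₂ i := fun z₁ z₂ i => by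
    simp only [glue, Equiv.piEquivPiSubtypeProd_symm_apply, i.2, dite_false]
  have factor : ∀ z₁ z₂, (∏ i, p i (glue (z₁, z₂) i)) *
        ∏ i, (if I i then ψ (glue (z₁, z₂)) (glue (z₁, z₂) i) else 1)
      = (∏ i : {i // ¬ I i}, p i (z₂ i)) *
        ∏ i : {i // I i}, p i (z₁ i) * ψ (glue (z₁, z₂)) (z₁ i) := fun z₁ z₂ => by
    rw [← Finset.prod_mul_distrib, ← Fintype.prod_subtype_mul_prod_subtype I, mul_comm]
    congr 1 <;> refine Finset.prod_congr rfl fun i _ => ?_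
    · rw [if_neg i.2, glue_out, mul_one]
    · rw [if_pos i.2, glue_in]
  have conditional : ∀ z₂, ∑ z₁, ∏ i : {i // I i}, p i (z₁ i) * ψ (glue (z₁, z₂)) (z₁ i) ≤ 1 := by
    intro z₂
    rcases isEmpty_or_nonempty ({i // I i} → Y) with _ | ⟨⟨z₀⟩⟩
    · simp
    have frozen : ∀ z₁, ψ (glue (z₁, z₂)) = ψ (glue (z₀, z₂)) := fun z₁ =>
      hψ _ _ fun i hi => by rw [glue_out _ _ ⟨i, hi⟩, glue_out _ _ ⟨i, hi⟩]
    simp only [frozen]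
    exact sum_prod_apply_le_one (f := fun (i : {i // I i}) y => p i y * ψ (glue (z₀, z₂)) y)
      (fun i y => mul_nonneg ((hp i).1 y) (hψ_nonneg _ y)) fun i => hψ_sum _ i i.2
  rw [← glue.sum_comp, Fintype.sum_prod_type, Finset.sum_comm]
  simp only [factor, ← Finset.mul_sum]
  calc ∑ z₂ : {i // ¬ I i} → Y, (∏ i : {i // ¬ I i}, p i (z₂ i)) *
        ∑ z₁, ∏ i : {i // I i}, p i (z₁ i) * ψ (glue (z₁, z₂)) (z₁ i)
      ≤ ∑ z₂ : {i // ¬ I i} → Y, ∏ i : {i // ¬ I i}, p i (z₂ i) := Finset.sum_le_sum fun z₂ _ =>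
        mul_le_of_le_one_right (Finset.prod_nonneg fun i _ => (hp i).1 _) (conditional z₂)
    _ ≤ 1 := sum_prod_apply_le_one (f := fun (i : {i // ¬ I i}) y => p i y)
        (fun i y => (hp i).1 y) fun i => (hp i).2.le

end Decoupling

section Empirical

variable {𝒮 𝒜 ℬ : Type} [DecidableEq 𝒮] [DecidableEq 𝒜] [DecidableEq ℬ] {N : ℕ}

lemma cnt_eq_sum (D : Fin N → 𝒮 × 𝒜 × ℬ × 𝒮) (s : 𝒮) (a : 𝒜) (b : ℬ) :
    (cnt D s a b : ℝ) = ∑ i, if triple (D i) = (s, a, b) then 1 else 0 := by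
  simp only [cnt, Finset.card_filter, triple, Prod.mk.injEq, Nat.cast_sum, Nat.cast_ite,
    Nat.cast_one, Nat.cast_zero]

lemma cntT_le_cnt (D : Fin N → 𝒮 × 𝒜 × ℬ × 𝒮) (s : 𝒮) (a : 𝒜) (b : ℬ) (t : 𝒮) :
    cntT D s a b t ≤ cnt D s a b :=
  Finset.card_le_card <| Finset.monotone_filter_right _ fun i _ hi => by simp only [hi, and_self]

lemma IsReward.rhat {r : 𝒮 → 𝒜 → ℬ → ℝ} (hr : IsReward r) (D : Fin N → 𝒮 × 𝒜 × ℬ × 𝒮) :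
    IsReward (ZSMG.rhat r D) := fun s a b => by
  unfold ZSMG.rhat
  split_ifs
  exacts [⟨le_rfl, zero_le_one⟩, hr s a b]

/-- The datasets `D` and `D'` differ at most in the successor states observed at the triple `x`. -/
structure AgreeOff (x : 𝒮 × 𝒜 × ℬ) (D D' : Fin N → 𝒮 × 𝒜 × ℬ × 𝒮) : Prop where
  triple_eq : ∀ i, triple (D i) = triple (D' i)
  eq_of_triple_ne : ∀ i, triple (D i) ≠ x → D i = D' i

variable {x : 𝒮 × 𝒜 × ℬ} {D D' : Fin N → 𝒮 × 𝒜 × ℬ × 𝒮}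

lemma AgreeOff.cnt_eq (h : AgreeOff x D D') : cnt D = cnt D' := by
  funext s a b
  rw [← Nat.cast_inj (R := ℝ)]
  simp only [cnt_eq_sum, h.triple_eq]

variable [Fintype 𝒮]

lemma cnt_mul_Phat (D : Fin N → 𝒮 × 𝒜 × ℬ × 𝒮) (s : 𝒮) (a : 𝒜) (b : ℬ) (t : 𝒮) :
    (cnt D s a b : ℝ) * Phat D s a b t = cntT D s a b t := by
  unfold Phat
  split_ifs with h
  · have none : cntT D s a b t = 0 := Nat.le_zero.1 (h ▸ cntT_le_cnt D s a b t)
    rw [h, none, Nat.cast_zero, zero_mul]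
  · exact mul_div_cancel₀ _ (Nat.cast_ne_zero.2 h)

lemma cnt_mul_Pexp_Phat (D : Fin N → 𝒮 × 𝒜 × ℬ × 𝒮) (s : 𝒮) (a : 𝒜) (b : ℬ) (f : 𝒮 → ℝ) :
    (cnt D s a b : ℝ) * Pexp (Phat D s a b) f
      = ∑ i, if triple (D i) = (s, a, b) then f (D i).2.2.2 else 0 := by
  have transition : ∀ (y : 𝒮 × 𝒜 × ℬ × 𝒮) t,
      y = (s, a, b, t) ↔ triple y = (s, a, b) ∧ t = y.2.2.2 := by
    rintro ⟨s', a', b', t'⟩ t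
    simp only [triple, Prod.mk.injEq, and_assoc, eq_comm]
  simp only [Pexp, Finset.mul_sum, ← mul_assoc, cnt_mul_Phat, cntT, Finset.card_filter,
    Nat.cast_sum, Finset.sum_mul]
  rw [Finset.sum_comm]
  refine Finset.sum_congr rfl fun i _ => ?_
  simp only [transition, Nat.cast_ite, Nat.cast_one, Nat.cast_zero, ite_mul, one_mul, zero_mul,
    ite_and, Finset.sum_ite_irrel, Finset.sum_ite_eq', Finset.mem_univ, if_true,
    Finset.sum_const_zero]

lemma Phat_mem_stdSimplex [Nonempty 𝒮] (D : Fin N → 𝒮 × 𝒜 × ℬ × 𝒮) (s : 𝒮) (a : 𝒜) (b : ℬ) :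
    Phat D s a b ∈ stdSimplex ℝ 𝒮 := by
  refine ⟨fun t => ?_, ?_⟩
  · unfold Phat
    split_ifs <;> positivity
  by_cases h : cnt D s a b = 0
  · simp [Phat, h]
  have visited : (cnt D s a b : ℝ) ≠ 0 := Nat.cast_ne_zero.2 h
  have total := cnt_mul_Pexp_Phat D s a b 1
  simp only [Pi.one_apply, ← cnt_eq_sum, mul_eq_left₀ visited] at total
  simpa only [Pexp, Pi.one_apply, mul_one] using total

lemma varP_Phat_le_of_infrequent [Nonempty 𝒮] {L d : ℝ} {V : 𝒮 → ℝ} (hγ : γ < 1)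
    (hV : ∀ t, V t ∈ Set.Icc 0 (1 / (1 - γ))) (hN : 0 < N) (hd : 0 < d) (hNd : N * d ≤ 8 * L)
    {s : 𝒮} {a : 𝒜} {b : ℬ} (D : Fin N → 𝒮 × 𝒜 × ℬ × 𝒮) :
    varP (Phat D s a b) V ≤ 8 * L / ((1 - γ) ^ 2 * N * d) := by
  have hγ_pos : 0 < 1 - γ := sub_pos.2 hγ
  refine (varP_le_sq (Phat_mem_stdSimplex D s a b) hV).trans ?_
  rw [one_div_pow, div_le_div_iff₀ (by positivity) (by positivity)]
  nlinarith [pow_pos hγ_pos 2]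

lemma AgreeOff.Phat_eq (h : AgreeOff x D D') {s : 𝒮} {a : 𝒜} {b : ℬ} (hx : (s, a, b) ≠ x) :
    Phat D s a b = Phat D' s a b := by
  have same_transitions : ∀ i t, D i = (s, a, b, t) ↔ D' i = (s, a, b, t) := by
    intro i t
    by_cases hi : triple (D i) = x
    · have ne : ∀ y : 𝒮 × 𝒜 × ℬ × 𝒮, triple y = x → y ≠ (s, a, b, t) :=
        fun y hy e => hx (by rw [← hy, e]; rfl)
      exact iff_of_false (ne _ hi) (ne _ (h.triple_eq i ▸ hi))
    · rw [h.eq_of_triple_ne i hi]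
  funext t
  simp only [Phat, cntT, h.cnt_eq, same_transitions]

lemma AgreeOff.pinned_TpeMinus_eq [Fintype 𝒜] [Fintype ℬ] (h : AgreeOff x D D') (γ δ Cb : ℝ)
    (r : 𝒮 → 𝒜 → ℬ → ℝ) (u : ℝ) :
    pinned (TpeMinus γ δ Cb N (cnt D) (Phat D) (rhat r D)) x u
      = pinned (TpeMinus γ δ Cb N (cnt D') (Phat D') (rhat r D')) x u := by
  funext Q s a b
  unfold pinned
  split_ifs with hx
  · rfl
  · simp only [TpeMinus, rhat, h.Phat_eq hx, h.cnt_eq]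

end Empirical

section Concentration

variable {𝒮 𝒜 ℬ : Type} [Fintype 𝒮] [Fintype 𝒜] [Fintype ℬ]
  [DecidableEq 𝒮] [DecidableEq 𝒜] [DecidableEq ℬ] {N : ℕ}
  {db : 𝒮 → 𝒜 → ℬ → ℝ} {P : 𝒮 → 𝒜 → ℬ → 𝒮 → ℝ} {s : 𝒮} {a : 𝒜} {b : ℬ}

lemma dsExp_exp_neg_cnt_le (hP : IsKernel P) (hdb : IsDist3 db) :
    dsExp db P (fun D : Fin N → 𝒮 × 𝒜 × ℬ × 𝒮 => Real.exp (-(cnt D s a b : ℝ)))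
      ≤ Real.exp (-(N * db s a b / 2)) := by
  let g : 𝒮 × 𝒜 × ℬ → ℝ := fun x => if x = (s, a, b) then Real.exp (-1) else 1
  have product : ∀ D : Fin N → 𝒮 × 𝒜 × ℬ × 𝒮,
      Real.exp (-(cnt D s a b : ℝ)) = ∏ i, g (triple (D i)) := fun D => by
    rw [cnt_eq_sum, ← Finset.sum_neg_distrib, Real.exp_sum]
    simp only [g, neg_ite, apply_ite Real.exp, neg_zero, Real.exp_zero]
  have mean : ∑ x : 𝒮 × 𝒜 × ℬ, db x.1 x.2.1 x.2.2 * g x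
      = 1 - db s a b * (1 - Real.exp (-1)) := by
    have split : ∀ x : 𝒮 × 𝒜 × ℬ, db x.1 x.2.1 x.2.2 * g x = db x.1 x.2.1 x.2.2
        - if x = (s, a, b) then db x.1 x.2.1 x.2.2 * (1 - Real.exp (-1)) else 0 := fun x => by
      simp only [g]
      split_ifs <;> ring
    simp only [split, Finset.sum_sub_distrib, hdb.sum_triple_eq_one, Finset.sum_ite_eq',
      Finset.mem_univ, if_true]
  have h_half := Real.exp_neg_one_lt_half
  have hd := hdb.1 s a b
  have hd_le := hdb.le_one s a b
  simp only [product, dsExp_prod_triple hP, mean]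
  calc (1 - db s a b * (1 - Real.exp (-1))) ^ N
      ≤ Real.exp (-(db s a b / 2)) ^ N := by
        refine pow_le_pow_left₀ (by nlinarith [Real.exp_pos (-1)]) ?_ N
        nlinarith [Real.add_one_le_exp (-(db s a b / 2))]
    _ = Real.exp (-(N * db s a b / 2)) := by
        rw [← Real.exp_nat_mul]
        ring_nf

lemma dsProb_cnt_le_le (hP : IsKernel P) (hdb : IsDist3 db) (s : 𝒮) (a : 𝒜) (b : ℬ) :
    dsProb db P {D : Fin N → 𝒮 × 𝒜 × ℬ × 𝒮 | (cnt D s a b : ℝ) ≤ N * db s a b / 4}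
      ≤ Real.exp (-(N * db s a b / 4)) := by
  have chernoff := dsProb_le_exp_neg_mul_dsExp_exp (N := N) hP hdb
    (fun D => -(cnt D s a b : ℝ)) (-(N * db s a b / 4))
  simp only [neg_le_neg_iff] at chernoff
  refine chernoff.trans ((mul_le_mul_of_nonneg_left (dsExp_exp_neg_cnt_le hP hdb)
    (Real.exp_pos _).le).trans_eq ?_)
  rw [← Real.exp_add]
  ring_nf

/-- A dataset is a sequence of triples together with a sequence of successor states. -/
def datasetEquiv (𝒮 𝒜 ℬ : Type) (N : ℕ) :
    (Fin N → 𝒮 × 𝒜 × ℬ) × (Fin N → 𝒮) ≃ (Fin N → 𝒮 × 𝒜 × ℬ × 𝒮) where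
  toFun q i := ((q.1 i).1, (q.1 i).2.1, (q.1 i).2.2, q.2 i)
  invFun D := (fun i => triple (D i), fun i => (D i).2.2.2)
  left_inv _ := rfl
  right_inv _ := rfl

lemma dsExp_prod_ite_le_one (hP : IsKernel P) (hdb : IsDist3 db)
    {φ : (Fin N → 𝒮 × 𝒜 × ℬ × 𝒮) → 𝒮 → ℝ}
    (hφ : ∀ D D', AgreeOff (s, a, b) D D' → φ D = φ D') (hφ_nonneg : ∀ D t, 0 ≤ φ D t)
    (hφ_mean : ∀ D, Pexp (P s a b) (φ D) ≤ 1) :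
    dsExp db P (fun D => ∏ i, if triple (D i) = (s, a, b) then φ D (D i).2.2.2 else 1) ≤ 1 := by
  let e := datasetEquiv 𝒮 𝒜 ℬ N
  have weight : ∀ q, dsWeight db P (e q) = (∏ i, db (q.1 i).1 (q.1 i).2.1 (q.1 i).2.2)
      * ∏ i, P (q.1 i).1 (q.1 i).2.1 (q.1 i).2.2 (q.2 i) := fun q => Finset.prod_mul_distrib
  have given_triples : ∀ X : Fin N → 𝒮 × 𝒜 × ℬ,
      ∑ S : Fin N → 𝒮, (∏ i, P (X i).1 (X i).2.1 (X i).2.2 (S i)) *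
        ∏ i, (if X i = (s, a, b) then φ (e (X, S)) (S i) else 1) ≤ 1 := fun X => by
    refine sum_prod_mul_prod_ite_le_one (fun i => hP _ _ _) (fun i => X i = (s, a, b))
      (ψ := fun S => φ (e (X, S))) (fun S S' h => hφ _ _ ⟨fun _ => rfl, fun i hi => ?_⟩)
      (fun S => hφ_nonneg _) fun S i hi => ?_
    · exact congrArg (fun t => ((X i).1, (X i).2.1, (X i).2.2, t)) (h i hi)
    · rw [hi]
      exact hφ_mean _
  calc dsExp db P (fun D => ∏ i, if triple (D i) = (s, a, b) then φ D (D i).2.2.2 else 1)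
      = ∑ X : Fin N → 𝒮 × 𝒜 × ℬ, (∏ i, db (X i).1 (X i).2.1 (X i).2.2) *
          ∑ S : Fin N → 𝒮, (∏ i, P (X i).1 (X i).2.1 (X i).2.2 (S i)) *
            ∏ i, (if X i = (s, a, b) then φ (e (X, S)) (S i) else 1) := by
        rw [dsExp, ← e.sum_comp, Fintype.sum_prod_type]
        simp only [weight, mul_assoc, ← Finset.mul_sum]
        rfl
    _ ≤ ∑ X : Fin N → 𝒮 × 𝒜 × ℬ, ∏ i, db (X i).1 (X i).2.1 (X i).2.2 :=
        Finset.sum_le_sum fun X _ => mul_le_of_le_one_right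
          (Finset.prod_nonneg fun i _ => hdb.1 _ _ _) (given_triples X)
    _ ≤ 1 := sum_prod_apply_le_one (f := fun (_ : Fin N) (x : 𝒮 × 𝒜 × ℬ) => db x.1 x.2.1 x.2.2)
        (fun _ _ => hdb.1 _ _ _) fun _ => hdb.sum_triple_eq_one.le

lemma dsProb_le_cnt_mul_Pexp_Phat_le (hP : IsKernel P) (hdb : IsDist3 db)
    {ξ : (Fin N → 𝒮 × 𝒜 × ℬ × 𝒮) → 𝒮 → ℝ}
    (hξ : ∀ D D', AgreeOff (s, a, b) D D' → ξ D = ξ D')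
    (hξ_mean : ∀ D, Pexp (P s a b) (fun t => Real.exp (ξ D t)) ≤ 1) (c : ℝ) :
    dsProb db P {D | c ≤ cnt D s a b * Pexp (Phat D s a b) (ξ D)} ≤ Real.exp (-c) := by
  have product : ∀ D : Fin N → 𝒮 × 𝒜 × ℬ × 𝒮,
      Real.exp (cnt D s a b * Pexp (Phat D s a b) (ξ D))
        = ∏ i, if triple (D i) = (s, a, b) then Real.exp (ξ D (D i).2.2.2) else 1 := fun D => by
    rw [cnt_mul_Pexp_Phat, Real.exp_sum]
    simp only [apply_ite Real.exp, Real.exp_zero]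
  refine (dsProb_le_exp_neg_mul_dsExp_exp hP hdb _ c).trans
    (mul_le_of_le_one_right (Real.exp_pos _).le ?_)
  simp only [product]
  exact dsExp_prod_ite_le_one (φ := fun D t => Real.exp (ξ D t)) hP hdb
    (fun D D' h => by rw [hξ D D' h]) (fun _ _ => (Real.exp_pos _).le) hξ_mean

lemma dsProb_lt_cnt_mul_varP_Phat_le [Nonempty 𝒮] (hP : IsKernel P) (hdb : IsDist3 db)
    {W : (Fin N → 𝒮 × 𝒜 × ℬ × 𝒮) → 𝒮 → ℝ}
    (hW : ∀ D D', AgreeOff (s, a, b) D D' → W D = W D') {H : ℝ} (hH : 0 < H)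
    (hW_mem : ∀ D t, W D t ∈ Set.Icc 0 H) (c : ℝ) :
    dsProb db P {D | cnt D s a b * (5 / 4 * varP (P s a b) (W D)) + 4 * H ^ 2 * c
      < cnt D s a b * varP (Phat D s a b) (W D)} ≤ Real.exp (-c) := by
  let sqDev (D : Fin N → 𝒮 × 𝒜 × ℬ × 𝒮) (t : 𝒮) : ℝ := (W D t - Pexp (P s a b) (W D)) ^ 2
  let Y (D : Fin N → 𝒮 × 𝒜 × ℬ × 𝒮) : 𝒮 → ℝ := (4 * H ^ 2)⁻¹ • sqDev D
  let ξ (D : Fin N → 𝒮 × 𝒜 × ℬ × 𝒮) (t : 𝒮) : ℝ := Y D t - 5 / 4 * Pexp (P s a b) (Y D)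
  have hY : ∀ D t, Y D t ∈ Set.Icc 0 (1 / 4) := by
    intro D t
    obtain ⟨W_nonneg, W_le⟩ := hW_mem D t
    obtain ⟨mean_nonneg, mean_le⟩ := Pexp_mem_Icc (hP s a b) (hW_mem D)
    have : sqDev D t ≤ H ^ 2 := sq_le_sq' (by linarith) (by linarith)
    have eq_div : Y D t = sqDev D t / (4 * H ^ 2) := inv_mul_eq_div _ _
    rw [eq_div]
    exact ⟨by positivity, by rw [div_le_iff₀ (by positivity)]; linarith⟩
  refine (dsProb_mono hP hdb fun D hD => ?_).trans (dsProb_le_cnt_mul_Pexp_Phat_le (ξ := ξ) hP hdb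
    (fun D D' h => by simp only [ξ, Y, sqDev, hW D D' h])
    (fun D => Pexp_exp_sub_le_one (hP s a b) (hY D)) c)
  have empirical : varP (Phat D s a b) (W D) ≤ Pexp (Phat D s a b) (sqDev D) :=
    varP_le_Pexp_sub_sq (Phat_mem_stdSimplex D s a b) _ _
  have population : Pexp (P s a b) (sqDev D) = varP (P s a b) (W D) :=
    (varP_eq_Pexp_sub_sq (hP s a b) (W D)).symm
  have exponent : Pexp (Phat D s a b) (ξ D)
      = (4 * H ^ 2)⁻¹ * (Pexp (Phat D s a b) (sqDev D) - 5 / 4 * varP (P s a b) (W D)) := by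
    simp only [ξ, sub_eq_add_neg, Pexp_add_const (Phat_mem_stdSimplex D s a b), Y, Pexp_smul,
      population]
    ring
  rw [Set.mem_ofPred_eq] at hD ⊢
  rw [exponent, mul_left_comm, inv_mul_eq_div, le_div_iff₀ (by positivity)]
  linarith [mul_le_mul_of_nonneg_left empirical (Nat.cast_nonneg (α := ℝ) (cnt D s a b))]

end Concentration

section LeaveOneOut

variable {𝒮 𝒜 ℬ : Type} [Fintype 𝒮] [Fintype 𝒜] [Fintype ℬ]
  [DecidableEq 𝒮] [DecidableEq 𝒜] [DecidableEq ℬ]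
  {N : ℕ} {γ δ Cb u : ℝ} {r : 𝒮 → 𝒜 → ℬ → ℝ}

/-- The leave-one-out value function at the triple `x`: the value of the fixed point of the
empirical pessimistic operator whose entry at `x` is replaced by `u`. -/
def pinnedValue (γ δ Cb : ℝ) (r : 𝒮 → 𝒜 → ℬ → ℝ) (x : 𝒮 × 𝒜 × ℬ) (u : ℝ)
    (D : Fin N → 𝒮 × 𝒜 × ℬ × 𝒮) : 𝒮 → ℝ :=
  valQ (fixedPointOn (pinned (TpeMinus γ δ Cb N (cnt D) (Phat D) (rhat r D)) x u)
    (qBox 𝒮 𝒜 ℬ (1 / (1 - γ))))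

lemma AgreeOff.pinnedValue_eq {x : 𝒮 × 𝒜 × ℬ} {D D' : Fin N → 𝒮 × 𝒜 × ℬ × 𝒮}
    (h : AgreeOff x D D') (γ δ Cb : ℝ) (r : 𝒮 → 𝒜 → ℬ → ℝ) (u : ℝ) :
    pinnedValue γ δ Cb r x u D = pinnedValue γ δ Cb r x u D' := by
  rw [pinnedValue, pinnedValue, h.pinned_TpeMinus_eq]

variable [Nonempty 𝒜] [Nonempty ℬ]

lemma valQ_QpeMinus_zero (D : Fin 0 → 𝒮 × 𝒜 × ℬ × 𝒮) : valQ (QpeMinus γ δ Cb r D) = 0 := by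
  have no_iteration : Titer γ 0 = 0 := by
    simp only [Titer, Nat.cast_zero, zero_div, Real.log_zero, Nat.ceil_zero]
  rw [QpeMinus, no_iteration]
  exact funext valQ_zero

variable [Nonempty 𝒮]

lemma isContractionOn_empirical (hγ : γ ∈ Set.Ico (1 / 2) 1) (hCb : 0 ≤ Cb)
    (hL : 0 ≤ logFactor γ δ N) (hr : IsReward r) (D : Fin N → 𝒮 × 𝒜 × ℬ × 𝒮) :
    IsContractionOn γ (TpeMinus γ δ Cb N (cnt D) (Phat D) (rhat r D))
      (qBox 𝒮 𝒜 ℬ (1 / (1 - γ))) :=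
  isContractionOn_TpeMinus hγ hCb hL (Phat_mem_stdSimplex D) (hr.rhat D)

lemma valQ_QpeMinus_mem_Icc (hγ : γ ∈ Set.Ico (1 / 2) 1) (hCb : 0 ≤ Cb)
    (hL : 0 ≤ logFactor γ δ N) (hr : IsReward r) (D : Fin N → 𝒮 × 𝒜 × ℬ × 𝒮) (s : 𝒮) :
    valQ (QpeMinus γ δ Cb r D) s ∈ Set.Icc 0 (1 / (1 - γ)) :=
  valQ_mem_Icc ((isContractionOn_empirical hγ hCb hL hr D).mapsTo.iterate _
    (zero_mem_qBox (one_div_nonneg.2 (sub_nonneg.2 hγ.2.le))) s)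

lemma pinnedValue_mem_Icc (hγ : γ ∈ Set.Ico (1 / 2) 1) (hCb : 0 ≤ Cb)
    (hL : 0 ≤ logFactor γ δ N) (hr : IsReward r) (hu : u ∈ Set.Icc 0 (1 / (1 - γ)))
    (x : 𝒮 × 𝒜 × ℬ) (D : Fin N → 𝒮 × 𝒜 × ℬ × 𝒮) (s : 𝒮) :
    pinnedValue γ δ Cb r x u D s ∈ Set.Icc 0 (1 / (1 - γ)) := by
  have hγ_nonneg : 0 ≤ γ := one_half_pos.le.trans hγ.1
  exact valQ_mem_Icc ((((isContractionOn_empirical hγ hCb hL hr D).pinned hγ_nonneg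
    hu).fixedPointOn_spec ⟨hγ_nonneg, hγ.2⟩ (isClosed_qBox _).isComplete
      ⟨0, zero_mem_qBox (hu.1.trans hu.2)⟩).1 s)

lemma exists_dist_valQ_QpeMinus_pinnedValue_le (hγ : γ ∈ Set.Ico (1 / 2) 1) (hCb : 0 ≤ Cb)
    (hL : 0 ≤ logFactor γ δ N) (hr : IsReward r) (hN : 0 < N) (x : 𝒮 × 𝒜 × ℬ)
    (D : Fin N → 𝒮 × 𝒜 × ℬ × 𝒮) :
    ∃ j ∈ Finset.range (⌊1 / (1 - γ) * N⌋₊ + 1),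
      dist (valQ (QpeMinus γ δ Cb r D)) (pinnedValue γ δ Cb r x (j / N) D) ≤ 2 / N := by
  have hγ_pos : 0 < γ := one_half_pos.trans_le hγ.1
  obtain ⟨j, hj, close⟩ := exists_dist_iterate_fixedPointOn_pinned_le
    (isContractionOn_empirical hγ hCb hL hr D) ⟨hγ_pos.le, hγ.2⟩
    (one_div_nonneg.2 (sub_nonneg.2 hγ.2.le)) hN (Titer γ N) x
  refine ⟨j, hj, (dist_valQ_le _ _).trans (close.trans ?_)⟩
  calc γ ^ Titer γ N * (1 / (1 - γ)) + 1 / N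
      ≤ 1 / N + 1 / N := add_le_add_left (pow_Titer_mul_le ⟨hγ_pos, hγ.2⟩ hN) _
    _ = 2 / N := by ring

end LeaveOneOut

section FailureEvent

variable {𝒮 𝒜 ℬ : Type} [Fintype 𝒮] [Fintype 𝒜] [Fintype ℬ] {N : ℕ} {γ δ Cb : ℝ}
  {r : 𝒮 → 𝒜 → ℬ → ℝ} {db : 𝒮 → 𝒜 → ℬ → ℝ} {P : 𝒮 → 𝒜 → ℬ → 𝒮 → ℝ}

/-- The triples expected to be visited at least `8 log (N / ((1 - γ) δ))` times. -/
def frequentTriples (γ δ : ℝ) (N : ℕ) (db : 𝒮 → 𝒜 → ℬ → ℝ) : Finset (𝒮 × 𝒜 × ℬ) :=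
  Finset.univ.filter fun x => 8 * logFactor γ δ N ≤ N * db x.1 x.2.1 x.2.2

lemma card_frequentTriples_mul_le (hdb : IsDist3 db) :
    (frequentTriples γ δ N db).card * (8 * logFactor γ δ N) ≤ N := by
  rw [← nsmul_eq_mul]
  calc (frequentTriples γ δ N db).card • (8 * logFactor γ δ N)
      ≤ ∑ x ∈ frequentTriples γ δ N db, N * db x.1 x.2.1 x.2.2 :=
        Finset.card_nsmul_le_sum _ _ _ fun x hx => (Finset.mem_filter.1 hx).2
    _ ≤ N := by
        rw [← Finset.mul_sum]
        exact mul_le_of_le_one_right N.cast_nonneg (hdb.sum_le_one _)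

lemma inv_sq_le_of_half_le {L d : ℝ} (hγ : γ ∈ Set.Ico (1 / 2) 1) (hN : 0 < N)
    (hd : d ∈ Set.Ioc 0 1) (hL : 1 / 2 ≤ L) :
    1 / (N : ℝ) ^ 2 ≤ L / ((1 - γ) ^ 2 * N * d) / 2 := by
  have hN_one : (1 : ℝ) ≤ N := Nat.one_le_cast.2 hN
  have hγ_pos : 0 < 1 - γ := sub_pos.2 hγ.2
  have hd_pos := hd.1
  have horizon : (1 - γ) ^ 2 ≤ (1 / 2) ^ 2 := pow_le_pow_left₀ hγ_pos.le (by linarith [hγ.1]) 2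
  have Nd_le : N * d ≤ (N : ℝ) ^ 2 := by nlinarith [hd.2]
  rw [div_div, div_le_div_iff₀ (by positivity) (by positivity)]
  nlinarith [mul_le_mul horizon Nd_le (by positivity) (by norm_num)]

variable [DecidableEq 𝒮] [DecidableEq 𝒜] [DecidableEq ℬ]

/-- The datasets which visit `x` less than a quarter as often as expected, or for which the
empirical variance at `x` of some leave-one-out value function with `u` on the grid
`{j / N : j ≤ N / (1 - γ)}` is too large. -/
def failureEvent (γ δ Cb : ℝ) (N : ℕ) (r : 𝒮 → 𝒜 → ℬ → ℝ) (db : 𝒮 → 𝒜 → ℬ → ℝ)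
    (P : 𝒮 → 𝒜 → ℬ → 𝒮 → ℝ) (x : 𝒮 × 𝒜 × ℬ) : Set (Fin N → 𝒮 × 𝒜 × ℬ × 𝒮) :=
  {D | (cnt D x.1 x.2.1 x.2.2 : ℝ) ≤ N * db x.1 x.2.1 x.2.2 / 4} ∪
    ⋃ j ∈ Finset.range (⌊1 / (1 - γ) * N⌋₊ + 1),
      {D | cnt D x.1 x.2.1 x.2.2 *
            (5 / 4 * varP (P x.1 x.2.1 x.2.2) (pinnedValue γ δ Cb r x (j / N) D))
            + 4 * (1 / (1 - γ)) ^ 2 * (2 * logFactor γ δ N)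
          < cnt D x.1 x.2.1 x.2.2 *
            varP (Phat D x.1 x.2.1 x.2.2) (pinnedValue γ δ Cb r x (j / N) D)}

variable [Nonempty 𝒮] [Nonempty 𝒜] [Nonempty ℬ] {s : 𝒮} {a : 𝒜} {b : ℬ}

lemma varP_Phat_le_of_notMem_failureEvent (hγ : γ ∈ Set.Ico (1 / 2) 1) (hCb : 0 ≤ Cb)
    (hL : 1 / 2 ≤ logFactor γ δ N) (hr : IsReward r) (hP : IsKernel P) (hN : 0 < N)
    (hd : db s a b ∈ Set.Ioc 0 1) {D : Fin N → 𝒮 × 𝒜 × ℬ × 𝒮}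
    (hD : D ∉ failureEvent γ δ Cb N r db P (s, a, b)) :
    varP (Phat D s a b) (valQ (QpeMinus γ δ Cb r D))
      ≤ 2 * varP (P s a b) (valQ (QpeMinus γ δ Cb r D))
        + 66 * logFactor γ δ N / ((1 - γ) ^ 2 * N * db s a b) := by
  simp only [failureEvent, Set.mem_union, Set.mem_iUnion, Set.mem_ofPred_eq, not_or, not_exists,
    not_le, not_lt] at hD
  obtain ⟨visits, deviation⟩ := hD
  obtain ⟨j, hj, close⟩ := exists_dist_valQ_QpeMinus_pinnedValue_le hγ hCb
    (one_half_pos.le.trans hL) hr hN (s, a, b) D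
  have hγ_pos : 0 < 1 - γ := sub_pos.2 hγ.2
  have hd_pos := hd.1
  set L := logFactor γ δ N
  set n : ℝ := (cnt D s a b : ℝ)
  set X := L / ((1 - γ) ^ 2 * N * db s a b) with hX
  set W := pinnedValue γ δ Cb r (s, a, b) (j / N) D
  have visits_pos : 0 < n := lt_of_le_of_lt (by positivity) visits
  have few_visits : 4 * (1 / (1 - γ)) ^ 2 * (2 * L) ≤ n * (32 * X) := by
    have : 4 * (1 / (1 - γ)) ^ 2 * (2 * L) = N * db s a b / 4 * (32 * X) := by
      rw [hX]
      field_simp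
      ring
    rw [this]
    exact mul_le_mul_of_nonneg_right visits.le (by positivity)
  have proxy : varP (Phat D s a b) W ≤ 5 / 4 * varP (P s a b) W + 32 * X := by
    refine le_of_mul_le_mul_left ?_ visits_pos
    linarith [deviation j hj]
  have transfer := varP_le_two_mul_varP_add (hP s a b) (Phat_mem_stdSimplex D s a b) close proxy
  have mesh := inv_sq_le_of_half_le hγ hN hd hL
  rw [mul_div_assoc]
  rw [div_pow] at transfer
  linarith [show (2 : ℝ) ^ 2 / N ^ 2 = 4 * (1 / N ^ 2) by ring]

lemma varP_Phat_le_of_notMem_biUnion (hγ : γ ∈ Set.Ico (1 / 2) 1) (hCb : 0 ≤ Cb)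
    (hL : 1 / 2 ≤ logFactor γ δ N) (hr : IsReward r) (hP : IsKernel P) (hN : 0 < N)
    (hd : db s a b ∈ Set.Ioc 0 1) {D : Fin N → 𝒮 × 𝒜 × ℬ × 𝒮}
    (hD : D ∉ ⋃ x ∈ frequentTriples γ δ N db, failureEvent γ δ Cb N r db P x) :
    varP (Phat D s a b) (valQ (QpeMinus γ δ Cb r D))
      ≤ 2 * varP (P s a b) (valQ (QpeMinus γ δ Cb r D))
        + 66 * logFactor γ δ N / ((1 - γ) ^ 2 * N * db s a b) := by
  by_cases frequent : (s, a, b) ∈ frequentTriples γ δ N db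
  · exact varP_Phat_le_of_notMem_failureEvent hγ hCb hL hr hP hN hd
      fun failure => hD (Set.mem_biUnion frequent failure)
  have few_expected : N * db s a b ≤ 8 * logFactor γ δ N :=
    (not_le.1 fun h => frequent (Finset.mem_filter.2 ⟨Finset.mem_univ _, h⟩)).le
  have hL_nonneg := one_half_pos.le.trans hL
  have hd_pos := hd.1
  calc varP (Phat D s a b) (valQ (QpeMinus γ δ Cb r D))
      ≤ 8 * logFactor γ δ N / ((1 - γ) ^ 2 * N * db s a b) :=
        varP_Phat_le_of_infrequent hγ.2 (valQ_QpeMinus_mem_Icc hγ hCb hL_nonneg hr D) hN hd_pos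
          few_expected D
    _ ≤ 66 * logFactor γ δ N / ((1 - γ) ^ 2 * N * db s a b) := by
        gcongr
        norm_num
    _ ≤ _ := le_add_of_nonneg_left (mul_nonneg zero_le_two (varP_nonneg (hP s a b) _))

lemma dsProb_failureEvent_le (hγ : γ ∈ Set.Ico (1 / 2) 1) (hCb : 0 ≤ Cb)
    (hL : 0 ≤ logFactor γ δ N) (hr : IsReward r) (hP : IsKernel P) (hdb : IsDist3 db) (hN : 0 < N)
    {x : 𝒮 × 𝒜 × ℬ} (hx : x ∈ frequentTriples γ δ N db) :
    dsProb db P (failureEvent γ δ Cb N r db P x)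
      ≤ 3 * (1 / (1 - γ) * N) * Real.exp (-(2 * logFactor γ δ N)) := by
  obtain ⟨s, a, b⟩ := x
  have expected_visits := (Finset.mem_filter.1 hx).2
  have hH : 1 ≤ 1 / (1 - γ) := (one_le_div (sub_pos.2 hγ.2)).2 (by linarith [hγ.1])
  have grid : 1 ≤ 1 / (1 - γ) * N := one_le_mul_of_one_le_of_one_le hH (Nat.one_le_cast.2 hN)
  set p := Real.exp (-(2 * logFactor γ δ N))
  have few_visits : dsProb db P {D : Fin N → 𝒮 × 𝒜 × ℬ × 𝒮 |
      (cnt D s a b : ℝ) ≤ N * db s a b / 4} ≤ p :=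
    (dsProb_cnt_le_le hP hdb s a b).trans (Real.exp_le_exp.2 (by linarith))
  have deviation : ∀ j ∈ Finset.range (⌊1 / (1 - γ) * N⌋₊ + 1), _ ≤ p := fun j hj =>
    dsProb_lt_cnt_mul_varP_Phat_le hP hdb
      (fun D D' h => h.pinnedValue_eq γ δ Cb r (j / N)) (zero_lt_one.trans_le hH)
      (pinnedValue_mem_Icc hγ hCb hL hr
        (natCast_div_mem_Icc hN (zero_le_one.trans hH) hj) (s, a, b))
      (2 * logFactor γ δ N)
  have union := (dsProb_biUnion_le hP hdb _ _).trans (Finset.sum_le_card_nsmul _ _ p deviation)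
  refine (dsProb_union_le hP hdb _ _).trans ((add_le_add few_visits union).trans ?_)
  rw [Finset.card_range, nsmul_eq_mul, ← one_add_mul, Nat.cast_add_one]
  exact mul_le_mul_of_nonneg_right
    (by linarith [Nat.floor_le (zero_le_one.trans grid)]) (Real.exp_pos _).le

lemma dsProb_biUnion_failureEvent_le (hγ : γ ∈ Set.Ico (1 / 2) 1) (hδ : δ ∈ Set.Ioo 0 1)
    (hCb : 0 ≤ Cb) (hr : IsReward r) (hP : IsKernel P) (hdb : IsDist3 db) (hN : 0 < N) :
    dsProb db P (⋃ x ∈ frequentTriples γ δ N db, failureEvent γ δ Cb N r db P x) ≤ δ := by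
  have hL := half_le_logFactor hγ hδ hN
  have : (0 : ℝ) < N := Nat.cast_pos.2 hN
  have hγ_pos : 0 < 1 - γ := sub_pos.2 hγ.2
  set k := (frequentTriples γ δ N db).card
  have card_le : (k : ℝ) ≤ N / 4 := by
    nlinarith [card_frequentTriples_mul_le (γ := γ) (δ := δ) (N := N) hdb, k.cast_nonneg (α := ℝ)]
  calc dsProb db P (⋃ x ∈ frequentTriples γ δ N db, failureEvent γ δ Cb N r db P x)
      ≤ k • (3 * (1 / (1 - γ) * N) * Real.exp (-(2 * logFactor γ δ N))) :=
        (dsProb_biUnion_le hP hdb _ _).trans <| Finset.sum_le_card_nsmul _ _ _ fun x hx =>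
          dsProb_failureEvent_le hγ hCb (one_half_pos.le.trans hL) hr hP hdb hN hx
    _ = k * (3 * δ * ((1 - γ) * δ / N)) := by
        rw [nsmul_eq_mul, two_mul, neg_add, Real.exp_add, exp_neg_logFactor hγ.2 hδ.1 hN]
        field_simp
    _ ≤ N / 4 * (3 * δ * ((1 - γ) * δ / N)) := by
        have := hδ.1
        gcongr
    _ = 3 / 4 * ((1 - γ) * δ) * δ := by field_simp
    _ ≤ δ := mul_le_of_le_one_left hδ.1.le (by nlinarith [hδ.1, hδ.2, hγ.1])

end FailureEvent

end ZSMG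

open ZSMG in
theorem statement15_general {𝒮 𝒜 ℬ : Type} [Fintype 𝒮] [Fintype 𝒜] [Fintype ℬ]
    [DecidableEq 𝒮] [DecidableEq 𝒜] [DecidableEq ℬ] [Nonempty 𝒮] [Nonempty 𝒜] [Nonempty ℬ]
    {γ δ Cb : ℝ} (hγ : γ ∈ Set.Ico (1 / 2) 1) (hδ : δ ∈ Set.Ioo 0 1) (hCb : 0 ≤ Cb)
    {P : 𝒮 → 𝒜 → ℬ → 𝒮 → ℝ} (hP : IsKernel P) {r : 𝒮 → 𝒜 → ℬ → ℝ} (hr : IsReward r)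
    {db : 𝒮 → 𝒜 → ℬ → ℝ} (hdb : IsDist3 db) (N : ℕ) :
    1 - δ ≤ dsProb db P {D : Fin N → 𝒮 × 𝒜 × ℬ × 𝒮 | ∀ s a b, 0 < db s a b →
      varP (Phat D s a b) (valQ (QpeMinus γ δ Cb r D)) ≤
        2 * varP (P s a b) (valQ (QpeMinus γ δ Cb r D)) +
          66 * logFactor γ δ N / ((1 - γ) ^ 2 * N * db s a b)} := by
  rcases N.eq_zero_or_pos with rfl | hN
  · have holds : ∀ D : Fin 0 → 𝒮 × 𝒜 × ℬ × 𝒮, ∀ s a b, 0 < db s a b →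
        varP (Phat D s a b) (valQ (QpeMinus γ δ Cb r D)) ≤
          2 * varP (P s a b) (valQ (QpeMinus γ δ Cb r D)) +
            66 * logFactor γ δ 0 / ((1 - γ) ^ 2 * (0 : ℕ) * db s a b) := fun D s a b _ => by
      simp [valQ_QpeMinus_zero, varP, Pexp]
    rw [Set.eq_univ_of_forall (s := {D | _}) holds, ← Set.compl_empty, dsProb_compl hP hdb,
      dsProb_empty, sub_zero]
    linarith [hδ.1]
  have few_failures := dsProb_biUnion_failureEvent_le hγ hδ hCb hr hP hdb hN
  refine (sub_le_sub_left few_failures 1).trans ?_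
  rw [← dsProb_compl hP hdb]
  exact dsProb_mono hP hdb fun D hD s a b hd =>
    varP_Phat_le_of_notMem_biUnion hγ hCb (half_le_logFactor hγ hδ hN) hr hP hN
      ⟨hd, hdb.le_one s a b⟩ hD

open ZSMG in
/-- Claim 2: with probability `1−δ`, the empirical variance of
`V_pe^−` is controlled by the true variance plus a lower-order term, for all
`(s,a,b)` with `d_b(s,a,b) > 0`. -/
theorem statement15 :
    ∃ Cb : ℝ, 0 < Cb ∧ ∃ c₄ : ℝ, 0 < c₄ ∧
      ∀ (𝒮 𝒜 ℬ : Type) [Fintype 𝒮] [Fintype 𝒜] [Fintype ℬ]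
        [DecidableEq 𝒮] [DecidableEq 𝒜] [DecidableEq ℬ]
        [Nonempty 𝒮] [Nonempty 𝒜] [Nonempty ℬ],
      ∀ γ δ : ℝ, 1 / 2 ≤ γ → γ < 1 → δ ∈ Set.Ioo (0 : ℝ) 1 →
      ∀ P : 𝒮 → 𝒜 → ℬ → 𝒮 → ℝ, IsKernel P →
      ∀ r : 𝒮 → 𝒜 → ℬ → ℝ, IsReward r →
      ∀ db : 𝒮 → 𝒜 → ℬ → ℝ, IsDist3 db →
      ∀ N : ℕ,
        1 - δ ≤ dsProb db P {D : Fin N → 𝒮 × 𝒜 × ℬ × 𝒮 |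
          ∀ (s : 𝒮) (a : 𝒜) (b : ℬ), 0 < db s a b →
            varP (Phat D s a b) (valQ (QpeMinus γ δ Cb r D)) ≤
              2 * varP (P s a b) (valQ (QpeMinus γ δ Cb r D)) +
                c₄ * Real.log ((N : ℝ) / ((1 - γ) * δ)) /
                  ((1 - γ) ^ 2 * (N : ℝ) * db s a b)} := by
  refine ⟨1, one_pos, 66, by norm_num, ?_⟩
  intro 𝒮 𝒜 ℬ _ _ _ _ _ _ _ _ _ γ δ hγ hγ1 hδ P hP r hr db hdb N
  exact statement15_general ⟨hγ, hγ1⟩ hδ zero_le_one hP hr hdb N
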